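/- arXiv:2005.08584 — 6 statements merged into one kernel-verified Lean document; each statement's English description precedes it below -/
import Mathlib

section
/- For every positive power function P and every matching μ₀ : M ≃ W, the probability (with respect to (X,Y) uniform on ([0,1]^{M×W})²) that μ₀ is a stable matching which is women-optimal for the induced preference profile equals the probability that μ₀ is a stable matching which is men-optimal. (Hence the output distributions of the women-proposing and men-proposing deferred acceptance procedures are identical under any symmetric power preference distribution.) -/
open MeasureTheory

/-- `w₁ ≻ₘ w₂` in the preference profile induced by the matrix `X` and the power function `P`. -/
def PrefM {N : ℕ} (P X : Fin N × Fin N → ℝ) (m w₁ w₂ : Fin N) : Prop :=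
  X (m, w₁) ^ P (m, w₁) < X (m, w₂) ^ P (m, w₂)

/-- `m₁ ≻_w m₂` in the preference profile induced by the matrix `Y` and the power function `P`. -/
def PrefW {N : ℕ} (P Y : Fin N × Fin N → ℝ) (w m₁ m₂ : Fin N) : Prop :=
  Y (m₁, w) ^ P (m₁, w) < Y (m₂, w) ^ P (m₂, w)

/-- The matching `μ` is stable for the preference profile induced by `XY = (X, Y)`:
no pair `(m, w)` with `w ≻ₘ μ m` and `m ≻_w μ⁻¹ w`. -/
def IsStable {N : ℕ} (P : Fin N × Fin N → ℝ)
    (XY : (Fin N × Fin N → ℝ) × (Fin N × Fin N → ℝ)) (μ : Fin N ≃ Fin N) : Prop :=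
  ¬ ∃ m w, PrefM P XY.1 m w (μ m) ∧ PrefW P XY.2 w m (μ.symm w)

/-- `μ` is a stable matching which is women-optimal: every woman weakly prefers her
partner in `μ` to her partner in any other stable matching. -/
def IsWomenOptimal {N : ℕ} (P : Fin N × Fin N → ℝ)
    (XY : (Fin N × Fin N → ℝ) × (Fin N × Fin N → ℝ)) (μ : Fin N ≃ Fin N) : Prop :=
  IsStable P XY μ ∧
    ∀ μ' : Fin N ≃ Fin N, IsStable P XY μ' →
      ∀ w, μ.symm w = μ'.symm w ∨ PrefW P XY.2 w (μ.symm w) (μ'.symm w)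

/-- `μ` is a stable matching which is men-optimal. -/
def IsMenOptimal {N : ℕ} (P : Fin N × Fin N → ℝ)
    (XY : (Fin N × Fin N → ℝ) × (Fin N × Fin N → ℝ)) (μ : Fin N ≃ Fin N) : Prop :=
  IsStable P XY μ ∧
    ∀ μ' : Fin N ≃ Fin N, IsStable P XY μ' →
      ∀ m, μ m = μ' m ∨ PrefM P XY.1 m (μ m) (μ' m)

/-- The uniform probability measure on `([0,1]^{M×W})²`. -/
noncomputable def unifBox (N : ℕ) :
    Measure ((Fin N × Fin N → ℝ) × (Fin N × Fin N → ℝ)) :=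
  (Measure.pi fun _ : Fin N × Fin N => volume.restrict (Set.Icc (0:ℝ) 1)).prod
    (Measure.pi fun _ : Fin N × Fin N => volume.restrict (Set.Icc (0:ℝ) 1))


set_option linter.unusedSectionVars false
set_option linter.unusedDecidableInType false
set_option linter.unusedFintypeInType false

section comb
variable {n : Type*} [Fintype n] [DecidableEq n]

def xStab (U V : n → n → ℝ) (μ : n ≃ n) : Prop :=
  ∀ m w, ¬ (U m w < U m (μ m) ∧ V w m < V w (μ.symm w))

def xMopt (U V : n → n → ℝ) : Prop :=
  xStab U V (Equiv.refl n) ∧ ∀ μ' : n ≃ n, xStab U V μ' → ∀ m, m = μ' m ∨ U m m < U m (μ' m)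

def xR (U V : n → n → ℝ) (w m : n) : Prop :=
  U m w < U m m ∧ ∀ m', m' ≠ m → U m' w < U m' m' → V w m < V w m'

def xC (U V : n → n → ℝ) (σ : Equiv.Perm n) : Prop :=
  ∀ w, σ w ≠ w → xR U V w (σ w)

lemma exists_cycle (S : Finset n) (hS : S.Nonempty) (s : n → n) (hs : ∀ x ∈ S, s x ∈ S) :
    ∃ C : Finset n, C ⊆ S ∧ C.Nonempty ∧ Set.BijOn s C C := by
  classical
  have hne : ((Finset.univ : Finset (Finset n)).filter
      (fun C => C ⊆ S ∧ C.Nonempty ∧ ∀ x ∈ C, s x ∈ C)).Nonempty :=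
    ⟨S, by simp [hS]; exact hs⟩
  obtain ⟨C, hC, hmin⟩ := Finset.exists_min_image _ Finset.card hne
  simp only [Finset.mem_filter, Finset.mem_univ, true_and] at hC hmin
  obtain ⟨h1, h2, h3⟩ := hC
  refine ⟨C, h1, h2, ?_⟩
  have hsub : C.image s ⊆ C := by
    intro x hx
    obtain ⟨y, hy, rfl⟩ := Finset.mem_image.1 hx
    exact h3 y hy
  have hle := hmin (C.image s) ⟨hsub.trans h1, h2.image s, fun x hx =>
    Finset.mem_image_of_mem s (hsub hx)⟩
  have heq : C.image s = C := Finset.eq_of_subset_of_card_le hsub hle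
  refine ⟨fun x hx => h3 x hx, ?_, ?_⟩
  · exact Finset.card_image_iff.1 (by rw [heq])
  · intro y hy
    have : y ∈ C.image s := by rw [heq]; exact hy
    obtain ⟨x, hx, rfl⟩ := Finset.mem_image.1 this
    exact ⟨x, hx, rfl⟩

lemma exists_perm_cycle (S : Finset n) (hS : S.Nonempty) (s : n → n) (hs : ∀ x ∈ S, s x ∈ S)
    (hfix : ∀ x ∈ S, s x ≠ x) :
    ∃ σ : Equiv.Perm n, σ ≠ 1 ∧ ∀ w, σ w ≠ w → w ∈ S ∧ σ w = s w := by
  classical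
  obtain ⟨C, hCS, hne, hb⟩ := exists_cycle S hS s hs
  let g : n → n := fun x => if x ∈ C then s x else x
  have hinj : Function.Injective g := by
    intro x y hxy
    by_cases hx : x ∈ C <;> by_cases hy : y ∈ C <;> simp only [g, hx, hy, if_true, if_false] at hxy
    · exact hb.injOn hx hy hxy
    · exact absurd (hxy ▸ hb.mapsTo hx) hy
    · exact absurd (hxy ▸ hb.mapsTo hy) hx
    · exact hxy
  refine ⟨Equiv.ofBijective g (Finite.injective_iff_bijective.1 hinj), ?_, ?_⟩
  · intro h
    obtain ⟨x, hx⟩ := hne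
    have := congrArg (fun e : Equiv.Perm n => e x) h
    simp [g, hx] at this
    exact hfix x (hCS hx) this
  · intro w hw
    by_cases hx : w ∈ C
    · exact ⟨hCS hx, by simp [g, hx]⟩
    · simp [g, hx] at hw

lemma xMopt_iff (U V : n → n → ℝ) (hU : ∀ m, Function.Injective (U m))
    (hV : ∀ m, Function.Injective (V m)) :
    xMopt U V ↔ xStab U V (Equiv.refl n) ∧ ∀ σ, xC U V σ → σ = 1 := by
  classical
  constructor
  · rintro ⟨hst, hopt⟩
    refine ⟨hst, fun σ hσ => ?_⟩
    have key : ∀ m, σ m ≠ m → U m (σ.symm m) < U m m := by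
      intro m hm
      have h1 : σ (σ.symm m) ≠ σ.symm m := by
        intro h
        rw [Equiv.apply_symm_apply] at h
        exact hm (by rw [h, Equiv.apply_symm_apply]; exact h)
      have := (hσ _ h1).1
      rwa [Equiv.apply_symm_apply] at this
    have hst' : xStab U V σ.symm := by
      rintro m w ⟨h1, h2⟩
      rw [Equiv.symm_symm] at h2
      have h3 : U m w < U m m := by
        by_cases hm : σ m = m
        · have : σ.symm m = m := by rw [Equiv.symm_apply_eq]; exact hm.symm
          rwa [this] at h1
        · exact h1.trans (key m hm)
      by_cases hw : σ w = w
      · rw [hw] at h2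
        exact hst m w ⟨h3, h2⟩
      · have hne : m ≠ σ w := by rintro rfl; exact lt_irrefl _ h2
        exact lt_asymm h2 ((hσ w hw).2 m hne h3)
    ext m
    by_contra hm
    simp only [Equiv.Perm.coe_one, id_eq] at hm
    rcases hopt _ hst' m with h | h
    · exact hm (by rw [Equiv.eq_symm_apply] at h; exact h)
    · exact lt_asymm h (key m hm)
  · rintro ⟨hst, hno⟩
    refine ⟨hst, fun μ' hμ' => ?_⟩
    by_contra! hcon
    obtain ⟨m0, hm0, hm0'⟩ := hcon
    let S : Finset n := Finset.univ.filter fun m => U m (μ' m) < U m m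
    have memS : ∀ m, m ∈ S ↔ U m (μ' m) < U m m := by intro m; simp [S]
    have hSne : S.Nonempty := ⟨m0, (memS _).2 (lt_of_le_of_ne hm0' fun h => hm0 (hU _ h).symm)⟩
    have hmap : ∀ m ∈ S, μ' m ∈ S := by
      intro m hm
      rw [memS] at hm
      have hne : μ' m ≠ m := by intro h; rw [h] at hm; exact lt_irrefl _ hm
      have h1 : ¬ V (μ' m) m < V (μ' m) (μ' m) := fun h => hst m (μ' m) ⟨hm, h⟩
      have h2 : V (μ' m) (μ' m) < V (μ' m) m :=
        lt_of_le_of_ne (not_lt.1 h1) fun h => hne (hV _ h)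
      have h3 : ¬ U (μ' m) (μ' m) < U (μ' m) (μ' (μ' m)) := fun h =>
        hμ' (μ' m) (μ' m) ⟨h, by rwa [Equiv.symm_apply_apply]⟩
      rw [memS]
      exact lt_of_le_of_ne (not_lt.1 h3) fun h => hne (μ'.injective (hU _ h))
    have himg : S.image μ' = S := Finset.eq_of_subset_of_card_le
      (by intro x hx; obtain ⟨y, hy, rfl⟩ := Finset.mem_image.1 hx; exact hmap y hy)
      (by rw [Finset.card_image_of_injective _ μ'.injective])
    have hsymm : ∀ w ∈ S, μ'.symm w ∈ S := by
      intro w hw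
      rw [← himg] at hw
      obtain ⟨y, hy, rfl⟩ := Finset.mem_image.1 hw
      simpa using hy
    have hex : ∀ w ∈ S, ∃ m, xR U V w m ∧ m ∈ S := by
      intro w hw
      let T : Finset n := Finset.univ.filter fun m => U m w < U m m
      have memT : ∀ m, m ∈ T ↔ U m w < U m m := by intro m; simp [T]
      have hw' := (memS _).1 (hsymm w hw)
      rw [Equiv.apply_symm_apply] at hw'
      obtain ⟨m, hm, hmin⟩ := Finset.exists_min_image T (V w) ⟨_, (memT _).2 hw'⟩
      rw [memT] at hm
      refine ⟨m, ⟨hm, fun m' hne h' => lt_of_le_of_ne (hmin m' ((memT _).2 h'))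
        fun h => hne (hV _ h).symm⟩, ?_⟩
      by_cases he : m = μ'.symm w
      · rw [he]; exact hsymm w hw
      · have hlt : V w m < V w (μ'.symm w) :=
          lt_of_le_of_ne (hmin _ ((memT _).2 hw')) fun h => he (hV _ h)
        rw [memS]
        by_contra hc
        exact hμ' m w ⟨lt_of_lt_of_le hm (not_lt.1 hc), hlt⟩
    choose! s hs1 hs2 using hex
    obtain ⟨σ, hσ1, hσ2⟩ := exists_perm_cycle S hSne s hs2 (by
      intro x hx h
      have := (hs1 x hx).1
      rw [h] at this
      exact lt_irrefl _ this)
    exact hσ1 (hno σ fun w hw => by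
      rw [(hσ2 w hw).2]; exact hs1 w (hσ2 w hw).1)

noncomputable def xc (σ : Equiv.Perm n) : ℝ :=
  ((Equiv.Perm.sign σ : ℤ) : ℝ) * ∏ w, (if σ w = w then 1 else -1)

lemma xc_inv (σ : Equiv.Perm n) : xc σ⁻¹ = xc σ := by
  unfold xc
  rw [Equiv.Perm.sign_inv]
  congr 1
  refine Finset.prod_congr rfl fun w _ => ?_
  have : σ⁻¹ w = w ↔ σ w = w := by
    rw [Equiv.Perm.inv_eq_iff_eq]; exact eq_comm
  simp only [this]

lemma xR_unique {U V : n → n → ℝ} {w m m' : n} (h : xR U V w m) (h' : xR U V w m') : m = m' := by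
  by_contra hne
  exact lt_asymm (h.2 m' (Ne.symm hne) h'.1) (h'.2 m hne h.1)

open Classical in
lemma sum_xc (U V : n → n → ℝ) :
    ∑ σ : Equiv.Perm n, xc σ * (if xC U V σ then 1 else 0)
      = if ∀ σ, xC U V σ → σ = 1 then 1 else 0 := by
  have hRne : ∀ w m, xR U V w m → m ≠ w := by
    rintro w _ h rfl; exact lt_irrefl _ h.1
  split_ifs with h
  · rw [Finset.sum_eq_single 1]
    · have : xC U V 1 := by intro w hw; simp at hw
      simp [this, xc]
    · intro σ _ hσ
      rw [if_neg (fun hc => hσ (h σ hc)), mul_zero]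
    · simp
  · push Not at h
    obtain ⟨τ, hτ, hτ1⟩ := h
    let M : Matrix n n ℝ := fun m w =>
      (if m = w then 1 else 0) - (if xR U V w m then 1 else 0)
    have hdet : ∑ σ : Equiv.Perm n, xc σ * (if xC U V σ then 1 else 0) = M.det := by
      rw [Matrix.det_apply']
      refine Finset.sum_congr rfl fun σ _ => ?_
      unfold xc
      rw [mul_assoc]
      congr 1
      by_cases hc : xC U V σ
      · rw [if_pos hc, mul_one]
        refine Finset.prod_congr rfl fun w _ => ?_
        by_cases hw : σ w = w
        · have : ¬ xR U V w w := fun h => hRne w w h rfl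
          simp [M, hw, this]
        · simp [M, hw, hc w hw]
      · rw [if_neg hc, mul_zero, eq_comm]
        unfold xC at hc
        push Not at hc
        obtain ⟨w, hw, hr⟩ := hc
        exact Finset.prod_eq_zero (Finset.mem_univ w) (by simp [M, hw, hr])
    rw [hdet]
    refine Matrix.exists_mulVec_eq_zero_iff.1 ⟨fun w => if τ w ≠ w then 1 else 0, ?_, ?_⟩
    · intro h0
      apply hτ1
      ext w
      have := congrFun h0 w
      simpa using this
    · ext m
      simp only [Matrix.mulVec, dotProduct, M, sub_mul, Finset.sum_sub_distrib, Pi.zero_apply]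
      rw [Finset.sum_eq_single m, Finset.sum_eq_single (τ.symm m)]
      · by_cases hm : τ m = m
        · have h2 : τ.symm m = m := by rw [Equiv.symm_apply_eq]; exact hm.symm
          simp [hm, h2]
        · have h1 : τ (τ.symm m) ≠ τ.symm m := by
            intro h
            rw [Equiv.apply_symm_apply] at h
            exact hm (by rw [h, Equiv.apply_symm_apply]; exact h)
          have h3 := hτ _ h1
          rw [Equiv.apply_symm_apply] at h3
          rw [if_pos rfl, if_pos hm, if_pos h1, if_pos h3]; simp
      · intro w _ hw
        by_cases hf : τ w = w
        · simp [hf]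
        · rw [if_neg, zero_mul]
          intro hr
          have := xR_unique hr (hτ w hf)
          exact hw (by rw [this, Equiv.symm_apply_apply])
      · simp
      · intro w _ hw
        simp [Ne.symm hw]
      · simp

def xF (σ : Equiv.Perm n) (U V : n → n → ℝ) : Prop :=
  ∀ m w, m ≠ w → m ≠ σ w → ¬ (U m w < max (U m m) (U m (σ⁻¹ m)) ∧
    V w m < max (V w w) (V w (σ w)))

def xG (σ : Equiv.Perm n) (U V : n → n → ℝ) : Prop :=
  (∀ m, σ m ≠ m → U m (σ⁻¹ m) < U m m) ∧ (∀ w, σ w ≠ w → V w w < V w (σ w)) ∧ xF σ U V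

lemma xF_inv (σ : Equiv.Perm n) (U V : n → n → ℝ) : xF σ⁻¹ V U ↔ xF σ U V := by
  unfold xF
  rw [inv_inv]
  constructor
  · rintro h m w h1 h2 ⟨h3, h4⟩
    exact h w m (Ne.symm h1) (fun h => h2 (by rw [h]; simp)) ⟨h4, h3⟩
  · rintro h m w h1 h2 ⟨h3, h4⟩
    exact h w m (Ne.symm h1) (fun h => h2 (by rw [h]; simp)) ⟨h4, h3⟩

lemma xG_iff (σ : Equiv.Perm n) (U V : n → n → ℝ) (hV : ∀ m, Function.Injective (V m)) :
    xG σ U V ↔ xStab U V (Equiv.refl n) ∧ xC U V σ := by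
  have hinv : ∀ m, σ m = m → σ⁻¹ m = m := by
    intro m hm; rw [Equiv.Perm.inv_eq_iff_eq]; exact hm.symm
  constructor
  · rintro ⟨h1, h2, h3⟩
    refine ⟨?_, ?_⟩
    · rintro m w ⟨ha, hb⟩
      simp only [Equiv.refl_apply, Equiv.refl_symm] at ha hb
      have hmw : m ≠ w := by rintro rfl; exact lt_irrefl _ ha
      by_cases hs : m = σ w
      · subst hs
        exact lt_asymm hb (h2 w hmw)
      · exact h3 m w hmw hs ⟨lt_max_of_lt_left ha, lt_max_of_lt_left hb⟩
    · intro w hw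
      refine ⟨?_, ?_⟩
      · have := h1 (σ w) (fun h => hw (σ.injective h))
        simpa using this
      · intro m' hne hlt
        have hmw : m' ≠ w := by rintro rfl; exact lt_irrefl _ hlt
        have h4 : ¬ V w m' < V w (σ w) := fun h =>
          h3 m' w hmw hne ⟨lt_max_of_lt_left hlt, lt_max_of_lt_right h⟩
        exact lt_of_le_of_ne (not_lt.1 h4) fun h => hne (hV _ h).symm
  · rintro ⟨hst, hC⟩
    have hst' : ∀ m w, U m w < U m m → V w w ≤ V w m := fun m w h =>
      not_lt.1 fun h' => hst m w ⟨h, h'⟩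
    have h1 : ∀ m, σ m ≠ m → U m (σ⁻¹ m) < U m m := by
      intro m hm
      have h0 : σ (σ⁻¹ m) = m := by simp
      have h1 : σ (σ⁻¹ m) ≠ σ⁻¹ m := by
        intro h
        rw [h0] at h
        exact hm (by nth_rewrite 1 [h]; exact h0)
      have := (hC _ h1).1
      rwa [h0] at this
    have h2 : ∀ w, σ w ≠ w → V w w < V w (σ w) := fun w hw =>
      lt_of_le_of_ne (hst' _ _ (hC w hw).1) fun h => hw (hV _ h).symm
    refine ⟨h1, h2, ?_⟩
    rintro m w hmw hms ⟨ha, hb⟩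
    have ha' : U m w < U m m := by
      by_cases hm : σ m = m
      · simpa [hinv m hm] using ha
      · rwa [max_eq_left (h1 m hm).le] at ha
    by_cases hw : σ w = w
    · rw [hw, max_self] at hb
      exact absurd hb (not_lt.2 (hst' _ _ ha'))
    · rw [max_eq_right (h2 w hw).le] at hb
      exact lt_asymm hb ((hC w hw).2 m hms ha')

open Classical in
lemma mopt_sum (U V : n → n → ℝ) (hU : ∀ m, Function.Injective (U m))
    (hV : ∀ m, Function.Injective (V m)) :
    (if xMopt U V then (1:ℝ) else 0) = ∑ σ : Equiv.Perm n, xc σ * (if xG σ U V then 1 else 0) := by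
  simp only [xG_iff _ U V hV, xMopt_iff U V hU hV]
  by_cases hs : xStab U V (Equiv.refl n)
  · simp only [hs, true_and]
    exact (sum_xc U V).symm
  · simp [hs]

end comb

noncomputable abbrev xlam : Measure ℝ := volume.restrict (Set.Icc (0:ℝ) 1)

lemma xlam_eq : xlam = volume.restrict (Set.Ioc (0:ℝ) 1) :=
  (Measure.restrict_congr_set Ioc_ae_eq_Icc).symm

lemma one_dim (p q : ℝ) (hp : 0 < p) (hq : 0 < q) (h : ℝ → ENNReal) :
    ENNReal.ofReal p * ∫⁻ x, ENNReal.ofReal (x ^ (p / q)) * h (x ^ p) ∂xlam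
      = ENNReal.ofReal q * ∫⁻ y, ENNReal.ofReal (y ^ (q / p)) * h (y ^ q) ∂xlam := by
  have hpq : 0 < p / q := div_pos hp hq
  have himg : (fun x : ℝ => x ^ (p / q)) '' Set.Ioc 0 1 = Set.Ioc 0 1 := by
    ext y
    constructor
    · rintro ⟨x, ⟨h0, h1⟩, rfl⟩
      exact ⟨Real.rpow_pos_of_pos h0 _, Real.rpow_le_one h0.le h1 hpq.le⟩
    · rintro ⟨h0, h1⟩
      refine ⟨y ^ (q / p), ⟨Real.rpow_pos_of_pos h0 _, Real.rpow_le_one h0.le h1 (by positivity)⟩, ?_⟩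
      simp only
      rw [← Real.rpow_mul h0.le]
      have : q / p * (p / q) = 1 := by field_simp
      rw [this, Real.rpow_one]
  have hcv := lintegral_image_eq_lintegral_abs_deriv_mul (s := Set.Ioc (0:ℝ) 1)
    (f := fun x : ℝ => x ^ (p / q)) (f' := fun x => (p / q) * x ^ (p / q - 1)) measurableSet_Ioc
    (fun x hx => (Real.hasDerivAt_rpow_const (Or.inl hx.1.ne')).hasDerivWithinAt)
    (by
      intro x hx y hy hxy
      exact (Real.rpow_left_inj hx.1.le hy.1.le hpq.ne').1 hxy)
    (fun y => ENNReal.ofReal (y ^ (q / p)) * h (y ^ q))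
  rw [himg] at hcv
  rw [xlam_eq, hcv, ← lintegral_const_mul' _ _ ENNReal.ofReal_ne_top,
    ← lintegral_const_mul' _ _ ENNReal.ofReal_ne_top]
  refine setLIntegral_congr_fun measurableSet_Ioc fun x hx => ?_
  have h0 := hx.1
  rw [← Real.rpow_mul h0.le, ← Real.rpow_mul h0.le]
  have e1 : p / q * (q / p) = 1 := by field_simp
  have e2 : p / q * q = p := by field_simp
  rw [e1, e2, Real.rpow_one, ← mul_assoc, ← mul_assoc, ← mul_assoc]
  congr 1
  have hpow : 0 < x ^ (p / q - 1) := Real.rpow_pos_of_pos h0 _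
  rw [abs_of_pos (by positivity), ← ENNReal.ofReal_mul hp.le, ← ENNReal.ofReal_mul hq.le,
    ← ENNReal.ofReal_mul (by positivity)]
  congr 1
  have : x ^ (p / q) = x ^ (p / q - 1) * x := by
    rw [← Real.rpow_add_one h0.ne']; congr 1; ring
  rw [this]
  field_simp

lemma inner_int (p q : ℝ) (hp : 0 < p) (hq : 0 < q) (c : ENNReal) (x : ℝ)
    (hx : x ∈ Set.Ioc (0:ℝ) 1) :
    ∫⁻ y, (if y ^ q < x ^ p then c else 0) ∂xlam = ENNReal.ofReal (x ^ (p / q)) * c := by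
  have hxp : x ^ (p / q) ≤ 1 := Real.rpow_le_one hx.1.le hx.2 (by positivity)
  have hpos : 0 < x ^ (p / q) := Real.rpow_pos_of_pos hx.1 _
  have key : ∀ y : ℝ, 0 < y → (y ^ q < x ^ p ↔ y < x ^ (p / q)) := by
    intro y hy
    have : x ^ p = (x ^ (p / q)) ^ q := by
      rw [← Real.rpow_mul hx.1.le]; congr 1; field_simp
    rw [this, Real.rpow_lt_rpow_iff hy.le hpos.le hq]
  have e : ∫⁻ y, (if y ^ q < x ^ p then c else 0) ∂xlam =
      ∫⁻ y in Set.Ioc (0:ℝ) 1, (Set.Ioo 0 (x ^ (p / q))).indicator (fun _ => c) y := by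
    rw [xlam_eq]
    refine setLIntegral_congr_fun measurableSet_Ioc fun y hy => ?_
    simp only [Set.indicator, Set.mem_Ioo, hy.1, true_and, key y hy.1]
  have hsub : Set.Ioo 0 (x ^ (p / q)) ∩ Set.Ioc 0 1 = Set.Ioo 0 (x ^ (p / q)) :=
    Set.inter_eq_left.2 (fun y hy => ⟨hy.1, hy.2.le.trans hxp⟩)
  rw [e, lintegral_indicator_const measurableSet_Ioo, Measure.restrict_apply measurableSet_Ioo,
    hsub, Real.volume_Ioo, sub_zero, mul_comm]

lemma two_dim (p q : ℝ) (hp : 0 < p) (hq : 0 < q) (h : ℝ → ENNReal) (hm : Measurable h) :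
    ENNReal.ofReal p * ∫⁻ x, ∫⁻ y, (if y ^ q < x ^ p then h (x ^ p) else 0) ∂xlam ∂xlam
      = ENNReal.ofReal q * ∫⁻ x, ∫⁻ y, (if x ^ p < y ^ q then h (y ^ q) else 0) ∂xlam ∂xlam := by
  have hsw : ∫⁻ x, ∫⁻ y, (if x ^ p < y ^ q then h (y ^ q) else 0) ∂xlam ∂xlam =
      ∫⁻ y, ∫⁻ x, (if x ^ p < y ^ q then h (y ^ q) else 0) ∂xlam ∂xlam := by
    apply lintegral_lintegral_swap
    apply Measurable.aemeasurable
    refine Measurable.ite (measurableSet_lt ?_ ?_) ?_ measurable_const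
    · exact measurable_fst.pow_const p
    · exact measurable_snd.pow_const q
    · exact hm.comp (measurable_snd.pow_const q)
  rw [hsw]
  have hae : ∀ᵐ x ∂xlam, x ∈ Set.Ioc (0:ℝ) 1 := by
    rw [xlam_eq]; exact ae_restrict_mem measurableSet_Ioc
  rw [lintegral_congr_ae (hae.mono fun x hx => inner_int p q hp hq (h (x ^ p)) x hx),
    lintegral_congr_ae (hae.mono fun x hx => inner_int q p hq hp (h (x ^ q)) x hx)]
  exact one_dim p q hp hq h

section
variable {I : Type*} [Fintype I] [DecidableEq I]

def xInv (p : I → ℝ) (i j : I) (f : (I → ℝ) → ENNReal) : Prop :=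
  ∀ z z' : I → ℝ, (∀ k, k ≠ i → k ≠ j → z k = z' k) →
    max (z i ^ p i) (z j ^ p j) = max (z' i ^ p i) (z' j ^ p j) → f z = f z'

lemma lt_meas (p : I → ℝ) (i j : I) : MeasurableSet {z : I → ℝ | z j ^ p j < z i ^ p i} :=
  measurableSet_lt ((measurable_pi_apply j).pow_const _) ((measurable_pi_apply i).pow_const _)

open Classical in
lemma one_step (p : I → ℝ) (hp : ∀ i, 0 < p i) (i j : I) (hij : i ≠ j)
    (f : (I → ℝ) → ENNReal) (hf : Measurable f) (hinv : xInv p i j f) :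
    ENNReal.ofReal (p i) * ∫⁻ z, (if z j ^ p j < z i ^ p i then f z else 0)
        ∂(Measure.pi fun _ : I => xlam)
      = ENNReal.ofReal (p j) * ∫⁻ z, (if z i ^ p i < z j ^ p j then f z else 0)
        ∂(Measure.pi fun _ : I => xlam) := by
  have m1 : Measurable fun z : I → ℝ => (if z j ^ p j < z i ^ p i then f z else 0) :=
    Measurable.ite (lt_meas p i j) hf measurable_const
  have m2 : Measurable fun z : I → ℝ => (if z i ^ p i < z j ^ p j then f z else 0) :=
    Measurable.ite (lt_meas p j i) hf measurable_const
  rw [← lintegral_const_mul _ m1, ← lintegral_const_mul _ m2]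
  have n1 := m1.const_mul (ENNReal.ofReal (p i))
  have n2 := m2.const_mul (ENNReal.ofReal (p j))
  refine lintegral_eq_of_lmarginal_eq {i, j} n1 n2 ?_
  have hni : i ∉ ({j} : Finset I) := by simpa using hij
  ext z
  rw [lmarginal_insert _ n1 hni, lmarginal_insert _ n2 hni]
  simp only [lmarginal_singleton]
  let h : ℝ → ENNReal := fun t => f (Function.update (Function.update z i (t ^ (p i)⁻¹)) j 0)
  have hm : Measurable h := by
    apply hf.comp
    have a1 : Measurable fun t : ℝ => Function.update z i (t ^ (p i)⁻¹) :=
      (measurable_update z).comp (measurable_id.pow_const _)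
    have a2 : Measurable fun y : I → ℝ => Function.update y j (0:ℝ) := measurable_update_left
    exact a2.comp a1
  have ui : ∀ x y, Function.update (Function.update z i x) j y i = x := by
    intro x y; simp [hij]
  have uj : ∀ x y, Function.update (Function.update z i x) j y j = y := by
    intro x y; simp
  have uo : ∀ x y x' y', ∀ k, k ≠ i → k ≠ j →
      Function.update (Function.update z i x) j y k
        = Function.update (Function.update z i x') j y' k := by
    intro x y x' y' k h1 h2; simp [h1, h2]
  have hae : ∀ᵐ x ∂xlam, x ∈ Set.Ioc (0:ℝ) 1 := by
    rw [xlam_eq]; exact ae_restrict_mem measurableSet_Ioc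
  have key := two_dim (p i) (p j) (hp i) (hp j) h hm
  simp only [ui, uj]
  have c1 : ∀ x : ℝ, Measurable fun y : ℝ => (if y ^ p j < x ^ p i then
      f (Function.update (Function.update z i x) j y) else 0) := fun x =>
    Measurable.ite (measurableSet_lt (measurable_id.pow_const _) measurable_const)
      (hf.comp (measurable_update _)) measurable_const
  have L : ∫⁻ x, ∫⁻ y, ENNReal.ofReal (p i) * (if y ^ p j < x ^ p i then
      f (Function.update (Function.update z i x) j y) else 0) ∂xlam ∂xlam =
      ENNReal.ofReal (p i) * ∫⁻ x, ∫⁻ y, (if y ^ p j < x ^ p i then h (x ^ p i) else 0) ∂xlam ∂xlam := by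
    rw [← lintegral_const_mul' _ _ ENNReal.ofReal_ne_top]
    refine lintegral_congr_ae (hae.mono fun x hx => ?_)
    simp only
    rw [← lintegral_const_mul' _ _ ENNReal.ofReal_ne_top]
    refine lintegral_congr fun y => ?_
    congr 1
    split_ifs with hlt
    · apply hinv _ _ (uo _ _ _ _)
      simp only [ui, uj]
      rw [max_eq_left hlt.le, Real.zero_rpow (hp j).ne', Real.rpow_rpow_inv hx.1.le (hp i).ne',
        max_eq_left (Real.rpow_nonneg hx.1.le _)]
    · rfl
  have Rr : ∫⁻ x, ∫⁻ y, ENNReal.ofReal (p j) * (if x ^ p i < y ^ p j then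
      f (Function.update (Function.update z i x) j y) else 0) ∂xlam ∂xlam =
      ENNReal.ofReal (p j) * ∫⁻ x, ∫⁻ y, (if x ^ p i < y ^ p j then h (y ^ p j) else 0) ∂xlam ∂xlam := by
    rw [← lintegral_const_mul' _ _ ENNReal.ofReal_ne_top]
    refine lintegral_congr fun x => ?_
    rw [← lintegral_const_mul' _ _ ENNReal.ofReal_ne_top]
    refine lintegral_congr_ae (hae.mono fun y hy => ?_)
    simp only
    congr 1
    split_ifs with hlt
    · apply hinv _ _ (uo _ _ _ _)
      simp only [ui, uj]
      have hy0 : 0 ≤ y ^ p j := Real.rpow_nonneg hy.1.le _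
      rw [max_eq_right hlt.le, Real.zero_rpow (hp j).ne', Real.rpow_inv_rpow hy0 (hp i).ne',
        max_eq_left hy0]
    · rfl
  rw [L, Rr]
  exact key

open Classical in
lemma multi_step (p : I → ℝ) (hp : ∀ i, 0 < p i) {κ : Type*} (i j : κ → I)
    (hi : Function.Injective i) (hj : Function.Injective j) (K : Finset κ)
    (hd : ∀ k ∈ K, ∀ l ∈ K, i k ≠ j l) :
    ∀ (f : (I → ℝ) → ENNReal), Measurable f → (∀ k ∈ K, xInv p (i k) (j k) f) →
    (∏ k ∈ K, ENNReal.ofReal (p (i k))) *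
      ∫⁻ z, (if ∀ k ∈ K, z (j k) ^ p (j k) < z (i k) ^ p (i k) then f z else 0)
        ∂(Measure.pi fun _ : I => xlam)
      = (∏ k ∈ K, ENNReal.ofReal (p (j k))) *
      ∫⁻ z, (if ∀ k ∈ K, z (i k) ^ p (i k) < z (j k) ^ p (j k) then f z else 0)
        ∂(Measure.pi fun _ : I => xlam) := by
  induction K using Finset.induction_on with
  | empty => intro f hf _; simp
  | insert a K ha ih =>
    intro f hf hinv
    have hd' : ∀ k ∈ K, ∀ l ∈ K, i k ≠ j l := fun k hk l hl =>
      hd k (Finset.mem_insert_of_mem hk) l (Finset.mem_insert_of_mem hl)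
    have haK : ∀ k ∈ K, k ≠ a := by rintro k hk rfl; exact ha hk
    have s1 := ih hd' (fun z => if z (j a) ^ p (j a) < z (i a) ^ p (i a) then f z else 0)
      (Measurable.ite (lt_meas p _ _) hf measurable_const) (by
        intro k hk z z' h1 h2
        have e := hinv k (Finset.mem_insert_of_mem hk) z z' h1 h2
        have ei : z (i a) = z' (i a) := h1 _ (fun h => haK k hk (hi h).symm)
          (hd _ (Finset.mem_insert_self _ _) _ (Finset.mem_insert_of_mem hk))
        have ej : z (j a) = z' (j a) := h1 _
          (hd _ (Finset.mem_insert_of_mem hk) _ (Finset.mem_insert_self _ _)).symm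
          (fun h => haK k hk (hj h).symm)
        simp only [ei, ej, e])
    have hmK : MeasurableSet {z : I → ℝ | ∀ k ∈ K, z (i k) ^ p (i k) < z (j k) ^ p (j k)} := by
      have : {z : I → ℝ | ∀ k ∈ K, z (i k) ^ p (i k) < z (j k) ^ p (j k)} =
        ⋂ k ∈ K, {z : I → ℝ | z (i k) ^ p (i k) < z (j k) ^ p (j k)} := by ext; simp
      rw [this]
      exact Finset.measurableSet_biInter _ fun k _ => lt_meas p _ _
    have s2 := one_step p hp (i a) (j a)
      (hd _ (Finset.mem_insert_self _ _) _ (Finset.mem_insert_self _ _))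
      (fun z => if ∀ k ∈ K, z (i k) ^ p (i k) < z (j k) ^ p (j k) then f z else 0)
      (Measurable.ite hmK hf measurable_const) (by
        intro z z' h1 h2
        have e := hinv a (Finset.mem_insert_self _ _) z z' h1 h2
        have ei : ∀ k ∈ K, z (i k) = z' (i k) := fun k hk => h1 _ (fun h => haK k hk (hi h))
          (hd _ (Finset.mem_insert_of_mem hk) _ (Finset.mem_insert_self _ _))
        have ej : ∀ k ∈ K, z (j k) = z' (j k) := fun k hk => h1 _
          (hd _ (Finset.mem_insert_self _ _) _ (Finset.mem_insert_of_mem hk)).symm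
          (fun h => haK k hk (hj h))
        have : (∀ k ∈ K, z (i k) ^ p (i k) < z (j k) ^ p (j k)) ↔
            (∀ k ∈ K, z' (i k) ^ p (i k) < z' (j k) ^ p (j k)) :=
          forall₂_congr fun k hk => by rw [ei k hk, ej k hk]
        simp only [this, e])
    simp only [← ite_and] at s1 s2
    simp only [Finset.forall_mem_insert]
    rw [Finset.prod_insert ha, Finset.prod_insert ha, mul_assoc]
    have t1 : ∀ z : I → ℝ, (z (j a) ^ p (j a) < z (i a) ^ p (i a) ∧
        ∀ k ∈ K, z (j k) ^ p (j k) < z (i k) ^ p (i k)) ↔ _ := fun z => and_comm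
    simp only [t1]
    rw [s1, mul_left_comm]
    have t2 : ∀ z : I → ℝ, ((∀ k ∈ K, z (i k) ^ p (i k) < z (j k) ^ p (j k)) ∧
        z (j a) ^ p (j a) < z (i a) ^ p (i a)) ↔ _ := fun z => and_comm
    simp only [t2]
    rw [s2, ← mul_assoc, mul_comm (∏ k ∈ K, _)]

open Classical in
lemma ae_ne (p : I → ℝ) (hp : ∀ i, 0 < p i) (i j : I) (hij : i ≠ j) :
    ∀ᵐ z ∂(Measure.pi fun _ : I => xlam), z i ^ p i ≠ z j ^ p j := by
  have hms : MeasurableSet {z : I → ℝ | z i ^ p i = z j ^ p j} :=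
    measurableSet_eq_fun ((measurable_pi_apply i).pow_const _) ((measurable_pi_apply j).pow_const _)
  rw [ae_iff]
  simp only [ne_eq, not_not]
  rw [← lintegral_indicator_one hms]
  have m1 : Measurable ({z : I → ℝ | z i ^ p i = z j ^ p j}.indicator (1 : (I → ℝ) → ENNReal)) :=
    measurable_one.indicator hms
  rw [lintegral_eq_of_lmarginal_eq (g := fun _ => 0) {j} m1 measurable_const, lintegral_zero]
  ext z
  simp only [lmarginal_singleton, lintegral_zero]
  refine (lintegral_eq_zero_iff (m1.comp (measurable_update z))).2 ?_
  have hae : ∀ᵐ x ∂xlam, x ∈ Set.Ioc (0:ℝ) 1 := by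
    rw [xlam_eq]; exact ae_restrict_mem measurableSet_Ioc
  have hne : ∀ᵐ x ∂xlam, x ≠ (z i ^ p i) ^ (p j)⁻¹ :=
    ae_restrict_of_ae (Measure.ae_ne volume _)
  filter_upwards [hae, hne] with x hx hx'
  simp only [Function.comp_apply, Pi.zero_apply, Set.indicator_apply_eq_zero, Set.mem_ofPred_eq]
  intro h
  exfalso
  simp only [Function.update_self, Function.update_of_ne hij] at h
  apply hx'
  rw [h, Real.rpow_rpow_inv hx.1.le (hp j).ne']
end

section final
variable {N : ℕ}

abbrev xI (N : ℕ) : Type := (Fin N × Fin N) ⊕ (Fin N × Fin N)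

noncomputable def zU (P : Fin N × Fin N → ℝ) (μ₀ : Fin N ≃ Fin N) (z : xI N → ℝ) (m w : Fin N) : ℝ :=
  z (Sum.inl (m, μ₀ w)) ^ P (m, μ₀ w)

noncomputable def zV (P : Fin N × Fin N → ℝ) (μ₀ : Fin N ≃ Fin N) (z : xI N → ℝ) (w m : Fin N) : ℝ :=
  z (Sum.inr (m, μ₀ w)) ^ P (m, μ₀ w)

noncomputable abbrev xpi (N : ℕ) : Measure (xI N → ℝ) := Measure.pi fun _ => xlam

lemma zU_meas (P : Fin N × Fin N → ℝ) (μ₀ : Fin N ≃ Fin N) (m w : Fin N) :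
    Measurable fun z => zU P μ₀ z m w := (measurable_pi_apply _).pow_const _

lemma zV_meas (P : Fin N × Fin N → ℝ) (μ₀ : Fin N ≃ Fin N) (m w : Fin N) :
    Measurable fun z => zV P μ₀ z m w := (measurable_pi_apply _).pow_const _

lemma xF_meas {α : Type*} [MeasurableSpace α] (σ : Equiv.Perm (Fin N)) (U V : α → Fin N → Fin N → ℝ)
    (hU : ∀ m w, Measurable fun z => U z m w) (hV : ∀ m w, Measurable fun z => V z m w) :
    MeasurableSet {z | xF σ (U z) (V z)} := by
  simp only [xF, Set.ofPred_forall]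
  refine MeasurableSet.iInter fun m => MeasurableSet.iInter fun w => MeasurableSet.iInter fun _ =>
    MeasurableSet.iInter fun _ => ?_
  exact ((measurableSet_lt (hU _ _) ((hU _ _).max (hU _ _))).inter
    (measurableSet_lt (hV _ _) ((hV _ _).max (hV _ _)))).compl

lemma xG_meas {α : Type*} [MeasurableSpace α] (σ : Equiv.Perm (Fin N)) (U V : α → Fin N → Fin N → ℝ)
    (hU : ∀ m w, Measurable fun z => U z m w) (hV : ∀ m w, Measurable fun z => V z m w) :
    MeasurableSet {z | xG σ (U z) (V z)} := by
  simp only [xG, Set.ofPred_and]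
  refine MeasurableSet.inter ?_ (MeasurableSet.inter ?_ (xF_meas σ U V hU hV))
  · simp only [Set.ofPred_forall]
    exact MeasurableSet.iInter fun m => MeasurableSet.iInter fun _ =>
      measurableSet_lt (hU _ _) (hU _ _)
  · simp only [Set.ofPred_forall]
    exact MeasurableSet.iInter fun m => MeasurableSet.iInter fun _ =>
      measurableSet_lt (hV _ _) (hV _ _)

lemma xF_congr (σ : Equiv.Perm (Fin N)) {U V U' V' : Fin N → Fin N → ℝ}
    (h1 : ∀ m, max (U m m) (U m (σ⁻¹ m)) = max (U' m m) (U' m (σ⁻¹ m)))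
    (h2 : ∀ w, max (V w w) (V w (σ w)) = max (V' w w) (V' w (σ w)))
    (h3 : ∀ m w, m ≠ w → m ≠ σ w → U m w = U' m w)
    (h4 : ∀ m w, m ≠ w → m ≠ σ w → V w m = V' w m) : xF σ U V ↔ xF σ U' V' := by
  unfold xF
  refine forall_congr' fun m => forall_congr' fun w => forall₂_congr fun ha hb => ?_
  rw [h1, h2, h3 m w ha hb, h4 m w ha hb]

open Classical in
lemma main_sym (P : Fin N × Fin N → ℝ) (hP : ∀ mw, 0 < P mw) (μ₀ : Fin N ≃ Fin N)
    (σ : Equiv.Perm (Fin N)) :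
    xpi N {z | xG σ (zU P μ₀ z) (zV P μ₀ z)} = xpi N {z | xG σ⁻¹ (zV P μ₀ z) (zU P μ₀ z)} := by
  let p : xI N → ℝ := Sum.elim P P
  have hp : ∀ i, 0 < p i := by rintro (i | i) <;> exact hP i
  let i : Fin N ⊕ Fin N → xI N :=
    Sum.elim (fun m => Sum.inl (m, μ₀ m)) (fun w => Sum.inr (σ w, μ₀ w))
  let j : Fin N ⊕ Fin N → xI N :=
    Sum.elim (fun m => Sum.inl (m, μ₀ (σ⁻¹ m))) (fun w => Sum.inr (w, μ₀ w))
  let S : Finset (Fin N) := Finset.univ.filter fun m => σ m ≠ m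
  have memS : ∀ m, m ∈ S ↔ σ m ≠ m := by intro m; simp [S]
  let K : Finset (Fin N ⊕ Fin N) := S.disjSum S
  have hinv : ∀ m, σ⁻¹ m = m ↔ σ m = m := by
    intro m; rw [Equiv.Perm.inv_eq_iff_eq]; exact eq_comm
  have hi : Function.Injective i := by
    rintro (a | a) (b | b) h <;> simp [i] at h ⊢
    · exact h
    · exact h
  have hj : Function.Injective j := by
    rintro (a | a) (b | b) h <;> simp [j] at h ⊢
    · exact h
    · exact h
  have hd : ∀ k ∈ K, ∀ l ∈ K, i k ≠ j l := by
    rintro (a | a) ha (b | b) hb h <;>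
      simp only [i, j, K, Sum.elim_inl, Sum.elim_inr, Sum.inl.injEq, Sum.inr.injEq, Prod.mk.injEq,
        reduceCtorEq, EmbeddingLike.apply_eq_iff_eq, Finset.inl_mem_disjSum,
        Finset.inr_mem_disjSum, memS] at h ha hb
    · obtain ⟨rfl, h⟩ := h
      exact ha ((hinv _).1 h.symm)
    · obtain ⟨h, rfl⟩ := h
      exact ha h
  have hFm := xF_meas σ (zU P μ₀) (zV P μ₀) (zU_meas P μ₀) (zV_meas P μ₀)
  have key := multi_step p hp i j hi hj K hd
    (fun z => if xF σ (zU P μ₀ z) (zV P μ₀ z) then 1 else 0)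
    (Measurable.ite hFm measurable_const measurable_const) (by
      rintro (a | a) ha z z' h1 h2
      · have hF : xF σ (zU P μ₀ z) (zV P μ₀ z) ↔ xF σ (zU P μ₀ z') (zV P μ₀ z') := by
          have hV : ∀ w m, zV P μ₀ z w m = zV P μ₀ z' w m := by
            intro w m
            unfold zV
            rw [h1 _ (by simp [i]) (by simp [j])]
          have hU : ∀ m w, m ≠ a → zU P μ₀ z m w = zU P μ₀ z' m w := by
            intro m w hm
            unfold zU
            rw [h1 _ (by simp [i, hm]) (by simp [j, hm])]
          apply xF_congr
          · intro m
            by_cases hm : m = a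
            · subst hm; exact h2
            · rw [hU _ _ hm, hU _ _ hm]
          · intro w; rw [hV, hV]
          · intro m w hmw hms
            unfold zU
            rw [h1]
            · simp only [i, Sum.elim_inl, ne_eq, Sum.inl.injEq, Prod.mk.injEq,
                EmbeddingLike.apply_eq_iff_eq]
              rintro ⟨rfl, h⟩; exact hmw h.symm
            · simp only [j, Sum.elim_inl, ne_eq, Sum.inl.injEq, Prod.mk.injEq,
                EmbeddingLike.apply_eq_iff_eq]
              rintro ⟨rfl, rfl⟩; exact hms (by simp)
          · intro m w _ _; exact hV _ _
        simp only [hF]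
      · have hF : xF σ (zU P μ₀ z) (zV P μ₀ z) ↔ xF σ (zU P μ₀ z') (zV P μ₀ z') := by
          have hU : ∀ w m, zU P μ₀ z w m = zU P μ₀ z' w m := by
            intro w m
            unfold zU
            rw [h1 _ (by simp [i]) (by simp [j])]
          have hV : ∀ w m, w ≠ a → zV P μ₀ z w m = zV P μ₀ z' w m := by
            intro w m hm
            unfold zV
            rw [h1 _ (by simp [i, hm]) (by simp [j, hm])]
          apply xF_congr
          · intro w; rw [hU, hU]
          · intro m
            by_cases hm : m = a
            · subst hm
              rw [max_comm, max_comm (zV P μ₀ z' m m)]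
              exact h2
            · rw [hV _ _ hm, hV _ _ hm]
          · intro m w _ _; exact hU _ _
          · intro m w hmw hms
            unfold zV
            rw [h1]
            · simp only [i, Sum.elim_inr, ne_eq, Sum.inr.injEq, Prod.mk.injEq,
                EmbeddingLike.apply_eq_iff_eq]
              rintro ⟨rfl, rfl⟩; exact hms rfl
            · simp only [j, Sum.elim_inr, ne_eq, Sum.inr.injEq, Prod.mk.injEq,
                EmbeddingLike.apply_eq_iff_eq]
              rintro ⟨rfl, rfl⟩; exact hmw rfl
        simp only [hF])
  have hprod : ∏ k ∈ K, ENNReal.ofReal (p (i k)) = ∏ k ∈ K, ENNReal.ofReal (p (j k)) := by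
    simp only [K, Finset.prod_disjSum, i, j, p, Sum.elim_inl, Sum.elim_inr]
    rw [mul_comm]
    congr 1
    refine Finset.prod_bij (fun w _ => σ w) ?_ ?_ ?_ ?_
    · intro a ha
      rw [memS] at ha ⊢
      exact fun h => ha (σ.injective h)
    · intro a _ b _ h; exact σ.injective h
    · intro b hb
      refine ⟨σ⁻¹ b, ?_, by simp⟩
      rw [memS] at hb ⊢
      intro h
      apply hb
      have h0 : σ (σ⁻¹ b) = b := by simp
      rw [h0] at h
      exact (hinv b).1 h.symm
    · intro a _
      simp
  have hne0 : ∏ k ∈ K, ENNReal.ofReal (p (j k)) ≠ 0 :=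
    Finset.prod_ne_zero_iff.2 fun k _ => (ENNReal.ofReal_pos.2 (hp _)).ne'
  have hnet : ∏ k ∈ K, ENNReal.ofReal (p (j k)) ≠ ⊤ :=
    ENNReal.prod_ne_top fun k _ => ENNReal.ofReal_ne_top
  rw [hprod] at key
  have key2 := (ENNReal.mul_right_inj hne0 hnet).1 key
  simp only [← ite_and] at key2
  have g1 := xG_meas σ (zU P μ₀) (zV P μ₀) (zU_meas P μ₀) (zV_meas P μ₀)
  have g2 := xG_meas σ⁻¹ (zV P μ₀) (zU P μ₀) (zV_meas P μ₀) (zU_meas P μ₀)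
  rw [← lintegral_indicator_one g1, ← lintegral_indicator_one g2]
  convert key2 using 2
  · ext z
    simp only [Set.indicator, Set.mem_ofPred_eq, Pi.one_apply]
    congr 1
    simp only [xG, K, Sum.forall, Finset.inl_mem_disjSum, Finset.inr_mem_disjSum, memS, and_assoc]
    rfl
  · ext z
    simp only [Set.indicator, Set.mem_ofPred_eq, Pi.one_apply]
    congr 1
    simp only [xG, K, Sum.forall, Finset.inl_mem_disjSum, Finset.inr_mem_disjSum, memS, and_assoc,
      xF_inv, inv_inv, ne_eq, hinv, eq_iff_iff]
    rw [and_left_comm]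
    rfl

lemma ae_inj (P : Fin N × Fin N → ℝ) (hP : ∀ mw, 0 < P mw) (μ₀ : Fin N ≃ Fin N) :
    ∀ᵐ z ∂(xpi N), (∀ m, Function.Injective (zU P μ₀ z m)) ∧
      (∀ m, Function.Injective (zV P μ₀ z m)) := by
  have hp : ∀ i : xI N, 0 < (Sum.elim P P : xI N → ℝ) i := by rintro (i | i) <;> exact hP i
  have h : ∀ᵐ z ∂(xpi N), ∀ i j : xI N, i ≠ j →
      z i ^ (Sum.elim P P : xI N → ℝ) i ≠ z j ^ (Sum.elim P P : xI N → ℝ) j := by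
    rw [ae_all_iff]; intro i
    rw [ae_all_iff]; intro j
    by_cases hij : i = j
    · simp [hij]
    · filter_upwards [ae_ne (Sum.elim P P : xI N → ℝ) hp i j hij] with z hz _ using hz
  filter_upwards [h] with z hz
  refine ⟨fun m a b hab => ?_, fun m a b hab => ?_⟩
  · by_contra hne
    exact hz (Sum.inl (m, μ₀ a)) (Sum.inl (m, μ₀ b)) (by simp [hne]) hab
  · by_contra hne
    exact hz (Sum.inr (a, μ₀ m)) (Sum.inr (b, μ₀ m)) (by simp [hne]) hab

open Classical in
lemma meas_of_sum {α : Type*} [MeasurableSpace α] (ν : Measure α) [IsFiniteMeasure ν]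
    {κ : Type*} [Fintype κ] (c : κ → ℝ) (G : κ → Set α) (hG : ∀ k, MeasurableSet (G k)) (S : Set α)
    (h : ∀ᵐ z ∂ν, (if z ∈ S then (1:ℝ) else 0) = ∑ k, c k * (if z ∈ G k then 1 else 0)) :
    (ν S).toReal = ∑ k, c k * (ν (G k)).toReal := by
  let φ : α → ℝ := fun z => ∑ k, c k * (if z ∈ G k then 1 else 0)
  have hφ : Measurable φ := Finset.measurable_sum _ fun k _ =>
    (Measurable.ite (hG k) measurable_const measurable_const).const_mul _
  have hT : MeasurableSet {z | φ z = 1} := hφ (measurableSet_singleton 1)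
  have hST : S =ᵐ[ν] {z | φ z = 1} := by
    filter_upwards [h] with z hz
    apply propext
    change z ∈ S ↔ φ z = 1
    change _ = φ z at hz
    rw [← hz]
    by_cases hs : z ∈ S <;> simp [hs]
  have hind : {z | φ z = 1}.indicator (1 : α → ℝ) =ᵐ[ν] φ := by
    filter_upwards [h] with z hz
    change _ = φ z at hz
    simp only [Set.indicator, Set.mem_ofPred_eq, ← hz]
    by_cases hs : z ∈ S <;> simp [hs]
  rw [measure_congr hST]
  change ν.real _ = _
  rw [← integral_indicator_one hT, integral_congr_ae hind]
  have e : φ = fun z => ∑ k, c k * (G k).indicator (1 : α → ℝ) z := by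
    ext z; simp [φ, Set.indicator]
  rw [e, integral_finsetSum]
  · refine Finset.sum_congr rfl fun k _ => ?_
    rw [integral_const_mul, integral_indicator_one (hG k)]; rfl
  · intro k _
    exact ((integrable_const (1:ℝ)).indicator (hG k)).const_mul _

lemma mopt_eq (P : Fin N × Fin N → ℝ) (hP : ∀ mw, 0 < P mw) (μ₀ : Fin N ≃ Fin N) :
    xpi N {z | xMopt (zV P μ₀ z) (zU P μ₀ z)} = xpi N {z | xMopt (zU P μ₀ z) (zV P μ₀ z)} := by
  classical
  have e1 := meas_of_sum (xpi N) (fun σ : Equiv.Perm (Fin N) => xc σ)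
    (fun σ => {z | xG σ (zU P μ₀ z) (zV P μ₀ z)})
    (fun σ => xG_meas σ _ _ (zU_meas P μ₀) (zV_meas P μ₀))
    {z | xMopt (zU P μ₀ z) (zV P μ₀ z)}
    (by
      filter_upwards [ae_inj P hP μ₀] with z hz
      convert mopt_sum _ _ hz.1 hz.2 using 2)
  have e2 := meas_of_sum (xpi N) (fun σ : Equiv.Perm (Fin N) => xc σ)
    (fun σ => {z | xG σ (zV P μ₀ z) (zU P μ₀ z)})
    (fun σ => xG_meas σ _ _ (zV_meas P μ₀) (zU_meas P μ₀))
    {z | xMopt (zV P μ₀ z) (zU P μ₀ z)}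
    (by
      filter_upwards [ae_inj P hP μ₀] with z hz
      convert mopt_sum _ _ hz.2 hz.1 using 2)
  rw [← ENNReal.toReal_eq_toReal_iff' (measure_ne_top _ _) (measure_ne_top _ _), e1, e2]
  rw [← Equiv.sum_comp (Equiv.inv (Equiv.Perm (Fin N)))]
  refine Finset.sum_congr rfl fun σ _ => ?_
  simp only [Equiv.inv_apply]
  rw [xc_inv, main_sym P hP μ₀ σ]

lemma stab_iff (P : Fin N × Fin N → ℝ) (μ₀ : Fin N ≃ Fin N) (z : xI N → ℝ) (μ : Fin N ≃ Fin N) :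
    IsStable P (fun i => z (Sum.inl i), fun i => z (Sum.inr i)) μ ↔
      xStab (zU P μ₀ z) (zV P μ₀ z) (μ.trans μ₀.symm) := by
  simp only [IsStable, xStab, PrefM, PrefW, zU, zV, not_exists, Equiv.trans_apply,
    Equiv.apply_symm_apply, Equiv.symm_trans_apply, Equiv.symm_symm]
  refine forall_congr' fun m => ?_
  constructor
  · intro h w; exact h (μ₀ w)
  · intro h w
    have := h (μ₀.symm w)
    simpa using this

lemma xStab_symm (U V : Fin N → Fin N → ℝ) (μ : Fin N ≃ Fin N) :
    xStab V U μ ↔ xStab U V μ.symm := by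
  unfold xStab
  constructor
  · rintro h m w ⟨h1, h2⟩; exact h w m ⟨h2, h1⟩
  · rintro h m w ⟨h1, h2⟩; exact h w m ⟨h2, h1⟩

lemma men_iff (P : Fin N × Fin N → ℝ) (μ₀ : Fin N ≃ Fin N) (z : xI N → ℝ) :
    IsMenOptimal P (fun i => z (Sum.inl i), fun i => z (Sum.inr i)) μ₀ ↔
      xMopt (zU P μ₀ z) (zV P μ₀ z) := by
  unfold IsMenOptimal xMopt
  rw [stab_iff P μ₀ z μ₀, Equiv.self_trans_symm]
  refine and_congr_right fun _ => ?_
  constructor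
  · intro h ν hν m
    have := h (ν.trans μ₀) (by
      rw [stab_iff P μ₀ z]; simpa [Equiv.trans_assoc] using hν) m
    simpa [PrefM, zU] using this
  · intro h μ' hμ' m
    rw [stab_iff P μ₀ z] at hμ'
    have := h _ hμ' m
    simpa [PrefM, zU, Equiv.eq_symm_apply] using this

lemma women_iff (P : Fin N × Fin N → ℝ) (μ₀ : Fin N ≃ Fin N) (z : xI N → ℝ) :
    IsWomenOptimal P (fun i => z (Sum.inl i), fun i => z (Sum.inr i)) μ₀ ↔
      xMopt (zV P μ₀ z) (zU P μ₀ z) := by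
  unfold IsWomenOptimal xMopt
  rw [stab_iff P μ₀ z μ₀, Equiv.self_trans_symm, xStab_symm, Equiv.refl_symm]
  refine and_congr_right fun _ => ?_
  constructor
  · intro h ν hν m
    rw [xStab_symm] at hν
    have := h (ν.symm.trans μ₀) (by
      rw [stab_iff P μ₀ z]; simpa [Equiv.trans_assoc] using hν) (μ₀ m)
    simpa [PrefW, zV] using this
  · intro h μ' hμ' w
    rw [stab_iff P μ₀ z] at hμ'
    have := h (μ'.trans μ₀.symm).symm (by rw [xStab_symm]; simpa using hμ') (μ₀.symm w)
    simpa [PrefW, zV] using this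

end final

/-- Under any symmetric power preference distribution, a fixed matching `μ₀` is as likely to
be the stable women-optimal matching as it is to be the stable men-optimal matching; hence the
output distributions of WPDA and MPDA are identical. -/
theorem wpda_eq_mpda (N : ℕ) (hN : 1 ≤ N) (P : Fin N × Fin N → ℝ)
    (hP : ∀ mw, 0 < P mw) (μ₀ : Fin N ≃ Fin N) :
    unifBox N {XY | IsWomenOptimal P XY μ₀} = unifBox N {XY | IsMenOptimal P XY μ₀} := by
  have mp := measurePreserving_sumPiEquivProdPi (X := fun _ : xI N => ℝ) (fun _ : xI N => xlam)
  have tr : ∀ S, unifBox N S = xpi N ((MeasurableEquiv.sumPiEquivProdPi (fun _ : xI N => ℝ)) ⁻¹' S) :=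
    fun S => (mp.measure_preimage_equiv S).symm
  rw [tr, tr]
  have h1 : (MeasurableEquiv.sumPiEquivProdPi (fun _ : xI N => ℝ)) ⁻¹' {XY | IsWomenOptimal P XY μ₀}
      = {z | xMopt (zV P μ₀ z) (zU P μ₀ z)} := by
    ext z; exact women_iff P μ₀ z
  have h2 : (MeasurableEquiv.sumPiEquivProdPi (fun _ : xI N => ℝ)) ⁻¹' {XY | IsMenOptimal P XY μ₀}
      = {z | xMopt (zU P μ₀ z) (zV P μ₀ z)} := by
    ext z; exact men_iff P μ₀ z
  rw [h1, h2]
  exact mopt_eq P hP μ₀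
end

section
/- Under the symmetric power preference distribution with positive power function P, for every permutation σ of M ⊔ W, the probability that σ is a stable permutation equals the iterated integral over x ∈ [0,1]^M and y ∈ [0,1]^W of the product of: x_m^{P(m,σ⁻¹(m))/P(m,w)} over all pairs (m,w) with σ(m) = w and σ(w) ≠ m; times y_w^{P(σ⁻¹(w),w)/P(m,w)} over all pairs (m,w) with σ(m) ≠ w and σ(w) = m; times (1 − x_m^{P(m,σ⁻¹(m))/P(m,w)} · y_w^{P(σ⁻¹(w),w)/P(m,w)}) over all pairs (m,w) with σ(m) ≠ w and σ(w) ≠ m. -/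
open MeasureTheory

/-- A permutation `σ` of `M ⊔ W` exchanging the two sides is encoded as the pair of
bijections `a : M ≃ W` (with `σ m = a m`) and `b : W ≃ M` (with `σ w = b w`);
then `σ⁻¹ m = b.symm m` and `σ⁻¹ w = a.symm w`.
`σ` is a stable permutation when every person weakly prefers their successor to their
predecessor, and no pair `(m, w)` with `σ m ≠ w` and `σ w ≠ m` satisfies
`w ≻ₘ σ⁻¹ m` and `m ≻_w σ⁻¹ w`. -/
def IsStablePerm {N : ℕ} (P : Fin N × Fin N → ℝ)
    (XY : (Fin N × Fin N → ℝ) × (Fin N × Fin N → ℝ)) (a b : Fin N ≃ Fin N) : Prop :=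
  (∀ m, a m = b.symm m ∨ PrefM P XY.1 m (a m) (b.symm m)) ∧
  (∀ w, b w = a.symm w ∨ PrefW P XY.2 w (b w) (a.symm w)) ∧
  ¬ ∃ m w, a m ≠ w ∧ b w ≠ m ∧ PrefM P XY.1 m w (b.symm m) ∧ PrefW P XY.2 w m (a.symm w)

/-- Glue the coordinates `x` (on the image of the section `e` of `p`) with the remaining ones. -/
def glueMap {I J : Type*} [DecidableEq I] (p : I → J) (e : J → I)
    (z : (J → ℝ) × (I → ℝ)) : I → ℝ :=
  fun i => if e (p i) = i then z.1 (p i) else z.2 i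

lemma measurable_glueMap {I J : Type*} [DecidableEq I] (p : I → J) (e : J → I) :
    Measurable (glueMap p e) := by
  unfold glueMap
  refine measurable_pi_lambda _ fun i => ?_
  split_ifs <;> fun_prop

lemma measurePreserving_glueMap {I J : Type*} [Fintype I] [Fintype J] [DecidableEq I]
    (p : I → J) (e : J → I) (hpe : ∀ j, p (e j) = j) (μ : Measure ℝ) [IsProbabilityMeasure μ] :
    MeasurePreserving (glueMap p e)
      ((Measure.pi fun _ : J => μ).prod (Measure.pi fun _ : I => μ))
      (Measure.pi fun _ : I => μ) := by
  classical
  refine ⟨measurable_glueMap p e, ?_⟩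
  refine (Measure.pi_eq fun s hs => ?_).symm
  rw [Measure.map_apply (measurable_glueMap p e) (MeasurableSet.univ_pi hs)]
  have h1 : glueMap p e ⁻¹' (Set.univ.pi s) =
      (Set.univ.pi fun j => s (e j)) ×ˢ
        (Set.univ.pi fun i => if e (p i) = i then Set.univ else s i) := by
    ext ⟨x, X⟩
    simp only [glueMap, Set.mem_preimage, Set.mem_pi, Set.mem_univ, forall_const, Set.mem_prod]
    constructor
    · intro h
      refine ⟨fun j => ?_, fun i => ?_⟩
      · have := h (e j)
        simpa [hpe] using this
      · have := h i
        split_ifs with hi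
        · trivial
        · simpa [hi] using this
    · rintro ⟨h1, h2⟩ i
      split_ifs with hi
      · have := h1 (p i)
        rwa [hi] at this
      · have := h2 i
        simpa [hi] using this
  rw [h1, Measure.prod_prod, Measure.pi_pi, Measure.pi_pi]
  rw [← Finset.prod_filter_mul_prod_filter_not Finset.univ (fun i => e (p i) = i)
    (fun i => μ (s i))]
  congr 1
  · refine Finset.prod_bij (fun j _ => e j) ?_ ?_ ?_ ?_
    · intro j _; simp [hpe]
    · intro j _ j' _ h
      simpa [hpe] using congrArg p h
    · intro i hi
      exact ⟨p i, Finset.mem_univ _, (Finset.mem_filter.1 hi).2⟩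
    · intro j _; rfl
  · rw [Finset.prod_filter]
    refine Finset.prod_congr rfl fun i _ => ?_
    by_cases h : e (p i) = i <;> simp [h]

lemma prod_prod_apply_swap {α β : Type*} [MeasurableSpace α] [MeasurableSpace β]
    (ν : Measure α) (ρ : Measure β) [IsProbabilityMeasure ν] [IsProbabilityMeasure ρ]
    {S : Set ((α × β) × (α × β))} (hS : MeasurableSet S) :
    (((ν.prod ρ).prod (ν.prod ρ)) S).toReal =
      ∫ x, ∫ y, ((ρ.prod ρ) {q | ((x, q.1), (y, q.2)) ∈ S}).toReal ∂ν ∂ν := by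
  have hmeas : Measurable fun r : α × α => (ρ.prod ρ) {q | ((r.1, q.1), (r.2, q.2)) ∈ S} := by
    have hT : MeasurableSet {z : (α × α) × (β × β) | ((z.1.1, z.2.1), (z.1.2, z.2.2)) ∈ S} :=
      hS.preimage (by fun_prop)
    exact measurable_measure_prodMk_left hT
  have h1 : ((ν.prod ρ).prod (ν.prod ρ)) S =
      ∫⁻ x, ∫⁻ y, (ρ.prod ρ) {q | ((x, q.1), (y, q.2)) ∈ S} ∂ν ∂ν := by
    rw [Measure.prod_apply hS, lintegral_prod _ (measurable_measure_prodMk_left hS).aemeasurable]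
    refine lintegral_congr fun x => ?_
    have h2 : ∀ X, (ν.prod ρ) (Prod.mk (x, X) ⁻¹' S) =
        ∫⁻ y, ρ {Y | ((x, X), (y, Y)) ∈ S} ∂ν := by
      intro X
      rw [Measure.prod_apply (hS.preimage (by fun_prop))]
      rfl
    simp only [h2]
    rw [lintegral_lintegral_swap]
    · refine lintegral_congr fun y => ?_
      rw [Measure.prod_apply]
      · rfl
      · exact hS.preimage (f := fun q : β × β => ((x, q.1), (y, q.2))) (by fun_prop)
    · have hT : MeasurableSet {z : (β × α) × β | ((x, z.1.1), (z.1.2, z.2)) ∈ S} :=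
        hS.preimage (by fun_prop)
      exact (measurable_measure_prodMk_left hT).aemeasurable
  rw [h1, ← integral_toReal]
  · refine integral_congr_ae (Filter.Eventually.of_forall fun x => ?_)
    dsimp only
    rw [← integral_toReal]
    · exact (hmeas.comp (measurable_prodMk_left (x := x))).aemeasurable
    · exact Filter.Eventually.of_forall fun y => measure_lt_top _ _
  · exact hmeas.lintegral_prod_right'.aemeasurable
  · refine Filter.Eventually.of_forall fun x => ?_
    calc _ ≤ ∫⁻ y, 1 ∂ν := lintegral_mono fun y => prob_le_one
      _ < ⊤ := by simp

instance unitProb : IsProbabilityMeasure (volume.restrict (Set.Icc (0:ℝ) 1)) :=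
  ⟨by simp⟩

lemma measure_rpow_lt {c p q : ℝ} (hc : c ∈ Set.Icc (0:ℝ) 1) (hp : 0 < p) (hq : 0 < q) :
    (volume.restrict (Set.Icc (0:ℝ) 1)) {t | t ^ p < c ^ q} = ENNReal.ofReal (c ^ (q / p)) := by
  have hms : MeasurableSet {t : ℝ | t ^ p < c ^ q} :=
    measurableSet_lt (by fun_prop) measurable_const
  have hle : c ^ (q / p) ≤ 1 := Real.rpow_le_one hc.1 hc.2 (div_pos hq hp).le
  have h0 : 0 ≤ c ^ (q / p) := Real.rpow_nonneg hc.1 _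
  have hcq : c ^ q = (c ^ (q / p)) ^ p := by
    rw [← Real.rpow_mul hc.1, div_mul_cancel₀ _ hp.ne']
  rw [Measure.restrict_apply hms]
  have : {t : ℝ | t ^ p < c ^ q} ∩ Set.Icc 0 1 = Set.Ico 0 (c ^ (q / p)) := by
    ext t
    simp only [Set.mem_inter_iff, Set.mem_ofPred_eq, Set.mem_Icc, Set.mem_Ico]
    constructor
    · rintro ⟨h, ht0, ht1⟩
      rw [hcq] at h
      exact ⟨ht0, (Real.rpow_lt_rpow_iff ht0 h0 hp).1 h⟩
    · rintro ⟨ht0, h⟩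
      refine ⟨?_, ht0, h.le.trans hle⟩
      rw [hcq]
      exact Real.rpow_lt_rpow ht0 h hp
  rw [this, Real.volume_Ico, sub_zero]

lemma measurableSet_forall_fin {Ω : Type*} [MeasurableSpace Ω] {N : ℕ} {p : Fin N → Ω → Prop}
    (h : ∀ i, MeasurableSet {z | p i z}) : MeasurableSet {z | ∀ i, p i z} := by
  have : {z | ∀ i, p i z} = ⋂ i, {z | p i z} := by ext; simp
  rw [this]; exact MeasurableSet.iInter h

lemma measurableSet_exists_fin {Ω : Type*} [MeasurableSpace Ω] {N : ℕ} {p : Fin N → Ω → Prop}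
    (h : ∀ i, MeasurableSet {z | p i z}) : MeasurableSet {z | ∃ i, p i z} := by
  have : {z | ∃ i, p i z} = ⋃ i, {z | p i z} := by ext; simp
  rw [this]; exact MeasurableSet.iUnion h

lemma measurableSet_isStablePerm {N : ℕ} (P : Fin N × Fin N → ℝ) (a b : Fin N ≃ Fin N) :
    MeasurableSet {XY | IsStablePerm P XY a b} := by
  have hM : ∀ m w₁ w₂, MeasurableSet
      {XY : (Fin N × Fin N → ℝ) × (Fin N × Fin N → ℝ) | PrefM P XY.1 m w₁ w₂} := by
    intro m w₁ w₂
    exact measurableSet_lt (by fun_prop) (by fun_prop)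
  have hW : ∀ m w₁ w₂, MeasurableSet
      {XY : (Fin N × Fin N → ℝ) × (Fin N × Fin N → ℝ) | PrefW P XY.2 m w₁ w₂} := by
    intro m w₁ w₂
    exact measurableSet_lt (by fun_prop) (by fun_prop)
  unfold IsStablePerm
  refine MeasurableSet.inter (s₁ := {XY | _}) ?_ (MeasurableSet.inter (s₁ := {XY | _}) ?_
    (MeasurableSet.compl (s := {XY | _}) ?_))
  · exact measurableSet_forall_fin fun m => MeasurableSet.union (MeasurableSet.const _) (hM _ _ _)
  · exact measurableSet_forall_fin fun m => MeasurableSet.union (MeasurableSet.const _) (hW _ _ _)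
  · exact measurableSet_exists_fin fun m => measurableSet_exists_fin fun w =>
      MeasurableSet.inter (MeasurableSet.const _) (MeasurableSet.inter (MeasurableSet.const _)
        (MeasurableSet.inter (hM _ _ _) (hW _ _ _)))

/-- The event for a single pair, given the values `x`, `y` of the predecessors. -/
def pairEvent {N : ℕ} (P : Fin N × Fin N → ℝ) (a b : Fin N ≃ Fin N) (x y : Fin N → ℝ)
    (mw : Fin N × Fin N) : Set (ℝ × ℝ) :=
  {q | (a mw.1 = mw.2 ∧ b mw.2 ≠ mw.1 → q.1 ^ P mw < x mw.1 ^ P (mw.1, b.symm mw.1)) ∧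
    (a mw.1 ≠ mw.2 ∧ b mw.2 = mw.1 → q.2 ^ P mw < y mw.2 ^ P (a.symm mw.2, mw.2)) ∧
    (a mw.1 ≠ mw.2 ∧ b mw.2 ≠ mw.1 → ¬ (q.1 ^ P mw < x mw.1 ^ P (mw.1, b.symm mw.1) ∧
      q.2 ^ P mw < y mw.2 ^ P (a.symm mw.2, mw.2)))}

lemma isStablePerm_glue_iff {N : ℕ} (P : Fin N × Fin N → ℝ) (a b : Fin N ≃ Fin N)
    (x y : Fin N → ℝ) (X Y : Fin N × Fin N → ℝ) :
    IsStablePerm P (glueMap Prod.fst (fun m => (m, b.symm m)) (x, X),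
      glueMap Prod.snd (fun w => (a.symm w, w)) (y, Y)) a b ↔
    ∀ mw, (X mw, Y mw) ∈ pairEvent P a b x y mw := by
  have hx : ∀ m, glueMap Prod.fst (fun m => (m, b.symm m)) (x, X) (m, b.symm m) = x m := by
    intro m; simp [glueMap]
  have hy : ∀ w, glueMap Prod.snd (fun w => (a.symm w, w)) (y, Y) (a.symm w, w) = y w := by
    intro w; simp [glueMap]
  have hX : ∀ m w, b w ≠ m →
      glueMap Prod.fst (fun m => (m, b.symm m)) (x, X) (m, w) = X (m, w) := by
    intro m w h
    have : b.symm m ≠ w := fun h' => h (by rw [← h', b.apply_symm_apply])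
    simp [glueMap, this]
  have hY : ∀ m w, a m ≠ w →
      glueMap Prod.snd (fun w => (a.symm w, w)) (y, Y) (m, w) = Y (m, w) := by
    intro m w h
    have : a.symm w ≠ m := fun h' => h (by rw [← h', a.apply_symm_apply])
    simp [glueMap, this]
  simp only [IsStablePerm, PrefM, PrefW, hx, hy, pairEvent, Set.mem_ofPred_eq, Prod.forall]
  constructor
  · rintro ⟨h1, h2, h3⟩ m w
    refine ⟨?_, ?_, ?_⟩
    · rintro ⟨rfl, hb⟩
      rcases h1 m with h | h
      · exact absurd (by rw [h, b.apply_symm_apply]) hb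
      · rwa [hX _ _ hb] at h
    · rintro ⟨ha, rfl⟩
      rcases h2 w with h | h
      · exact absurd (by rw [h, a.apply_symm_apply]) ha
      · rwa [hY _ _ ha] at h
    · rintro ⟨ha, hb⟩ h
      refine h3 ⟨m, w, ha, hb, ?_⟩
      rwa [hX _ _ hb, hY _ _ ha]
  · intro h
    refine ⟨fun m => ?_, fun w => ?_, ?_⟩
    · by_cases hb : b (a m) = m
      · left; rw [b.eq_symm_apply]; exact hb
      · right; rw [hX _ _ hb]; exact (h m (a m)).1 ⟨rfl, hb⟩
    · by_cases ha : a (b w) = w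
      · left; rw [a.eq_symm_apply]; exact ha
      · right; rw [hY _ _ ha]; exact (h (b w) w).2.1 ⟨ha, rfl⟩
    · rintro ⟨m, w, ha, hb, h'⟩
      rw [hX _ _ hb, hY _ _ ha] at h'
      exact (h m w).2.2 ⟨ha, hb⟩ h'

lemma measure_pairEvent {N : ℕ} (P : Fin N × Fin N → ℝ) (hP : ∀ mw, 0 < P mw)
    (a b : Fin N ≃ Fin N) (x y : Fin N → ℝ) (hx : ∀ m, x m ∈ Set.Icc (0:ℝ) 1)
    (hy : ∀ m, y m ∈ Set.Icc (0:ℝ) 1) (mw : Fin N × Fin N) :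
    (((volume.restrict (Set.Icc (0:ℝ) 1)).prod (volume.restrict (Set.Icc (0:ℝ) 1)))
      (pairEvent P a b x y mw)).toReal =
      (if a mw.1 = mw.2 ∧ b mw.2 ≠ mw.1 then x mw.1 ^ (P (mw.1, b.symm mw.1) / P mw) else 1) *
      (if a mw.1 ≠ mw.2 ∧ b mw.2 = mw.1 then y mw.2 ^ (P (a.symm mw.2, mw.2) / P mw) else 1) *
      (if a mw.1 ≠ mw.2 ∧ b mw.2 ≠ mw.1 then (1 - x mw.1 ^ (P (mw.1, b.symm mw.1) / P mw) *
              y mw.2 ^ (P (a.symm mw.2, mw.2) / P mw)) else 1) := by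
  have e1 := measure_rpow_lt (hx mw.1) (hP mw) (hP (mw.1, b.symm mw.1))
  have e2 := measure_rpow_lt (hy mw.2) (hP mw) (hP (a.symm mw.2, mw.2))
  have n1 : 0 ≤ x mw.1 ^ (P (mw.1, b.symm mw.1) / P mw) := Real.rpow_nonneg (hx _).1 _
  have n2 : 0 ≤ y mw.2 ^ (P (a.symm mw.2, mw.2) / P mw) := Real.rpow_nonneg (hy _).1 _
  set A : Set ℝ := {t | t ^ P mw < x mw.1 ^ P (mw.1, b.symm mw.1)} with hA
  set B : Set ℝ := {t | t ^ P mw < y mw.2 ^ P (a.symm mw.2, mw.2)} with hB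
  have mA : MeasurableSet A := measurableSet_lt (by fun_prop) measurable_const
  have mB : MeasurableSet B := measurableSet_lt (by fun_prop) measurable_const
  by_cases ha : a mw.1 = mw.2 <;> by_cases hb : b mw.2 = mw.1
  · have : pairEvent P a b x y mw = Set.univ := by
      ext q; simp [pairEvent, ha, hb]
    rw [this]; simp [ha, hb]
  · have : pairEvent P a b x y mw = A ×ˢ Set.univ := by
      ext q; simp [pairEvent, ha, hb, hA]
    rw [this, Measure.prod_prod, e1]; simp [ha, hb, n1]
  · have : pairEvent P a b x y mw = Set.univ ×ˢ B := by
      ext q; simp [pairEvent, ha, hb, hB]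
    rw [this, Measure.prod_prod, e2]; simp [ha, hb, n2]
  · have : pairEvent P a b x y mw = (A ×ˢ B)ᶜ := by
      ext q
      simp only [pairEvent, ha, hb, hA, hB, Set.mem_ofPred_eq, Set.mem_compl_iff, Set.mem_prod]
      simp [ha, hb]
    rw [this, prob_compl_eq_one_sub (mA.prod mB), Measure.prod_prod, e1, e2,
      ENNReal.toReal_sub_of_le, ENNReal.toReal_mul, ENNReal.toReal_ofReal n1,
      ENNReal.toReal_ofReal n2]
    · simp [ha, hb]
    · rw [← e1, ← e2, ← Measure.prod_prod]; exact prob_le_one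
    · simp

/-- Integral formula for the probability that a permutation is stable, under the symmetric
power preference distribution with power function `P`. -/
theorem prob_stablePerm_eq_integral (N : ℕ) (hN : 1 ≤ N) (P : Fin N × Fin N → ℝ)
    (hP : ∀ mw, 0 < P mw) (a b : Fin N ≃ Fin N) :
    (unifBox N {XY | IsStablePerm P XY a b}).toReal =
      ∫ x in Set.univ.pi fun _ : Fin N => Set.Icc (0:ℝ) 1,
        ∫ y in Set.univ.pi fun _ : Fin N => Set.Icc (0:ℝ) 1,
          (∏ mw ∈ Finset.univ.filter fun mw : Fin N × Fin N => a mw.1 = mw.2 ∧ b mw.2 ≠ mw.1,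
              x mw.1 ^ (P (mw.1, b.symm mw.1) / P mw)) *
          (∏ mw ∈ Finset.univ.filter fun mw : Fin N × Fin N => a mw.1 ≠ mw.2 ∧ b mw.2 = mw.1,
              y mw.2 ^ (P (a.symm mw.2, mw.2) / P mw)) *
          ∏ mw ∈ Finset.univ.filter fun mw : Fin N × Fin N => a mw.1 ≠ mw.2 ∧ b mw.2 ≠ mw.1,
            (1 - x mw.1 ^ (P (mw.1, b.symm mw.1) / P mw) *
              y mw.2 ^ (P (a.symm mw.2, mw.2) / P mw)) := by
  classical
  have hset : (Measure.restrict (volume : Measure (Fin N → ℝ))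
      (Set.univ.pi fun _ : Fin N => Set.Icc (0:ℝ) 1)) =
      Measure.pi fun _ : Fin N => volume.restrict (Set.Icc (0:ℝ) 1) := by
    rw [volume_pi, Measure.restrict_pi_pi]
  have hbox : MeasurableSet (Set.univ.pi fun _ : Fin N => Set.Icc (0:ℝ) 1) :=
    MeasurableSet.univ_pi fun _ => measurableSet_Icc
  have hS := measurableSet_isStablePerm P a b
  have g1 := measurePreserving_glueMap (Prod.fst : Fin N × Fin N → Fin N)
    (fun m => (m, b.symm m)) (fun _ => rfl) (volume.restrict (Set.Icc (0:ℝ) 1))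
  have g2 := measurePreserving_glueMap (Prod.snd : Fin N × Fin N → Fin N)
    (fun w => (a.symm w, w)) (fun _ => rfl) (volume.restrict (Set.Icc (0:ℝ) 1))
  have g := g1.prod g2
  unfold unifBox
  rw [← g.measure_preimage hS.nullMeasurableSet, prod_prod_apply_swap _ _ (g.measurable hS),
    ← hset]
  refine setIntegral_congr_fun hbox fun x hx => setIntegral_congr_fun hbox fun y hy => ?_
  have h1 : {q : (Fin N × Fin N → ℝ) × (Fin N × Fin N → ℝ) | ((x, q.1), (y, q.2)) ∈
      Prod.map (glueMap Prod.fst fun m => (m, b.symm m))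
        (glueMap Prod.snd fun w => (a.symm w, w)) ⁻¹' {XY | IsStablePerm P XY a b}} =
      {q | ∀ mw, (q.1 mw, q.2 mw) ∈ pairEvent P a b x y mw} := by
    ext q
    exact isStablePerm_glue_iff P a b x y q.1 q.2
  rw [h1, ← (measurePreserving_arrowProdEquivProdArrow ℝ ℝ (Fin N × Fin N)
    (fun _ => volume.restrict (Set.Icc (0:ℝ) 1))
    (fun _ => volume.restrict (Set.Icc (0:ℝ) 1))).measure_preimage_equiv]
  have h2 : (MeasurableEquiv.arrowProdEquivProdArrow ℝ ℝ (Fin N × Fin N)) ⁻¹'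
      {q | ∀ mw, (q.1 mw, q.2 mw) ∈ pairEvent P a b x y mw} =
      Set.univ.pi (pairEvent P a b x y) := by
    ext q
    simp [MeasurableEquiv.arrowProdEquivProdArrow, Equiv.arrowProdEquivProdArrow]
  rw [h2, Measure.pi_pi, ENNReal.toReal_prod]
  rw [Finset.prod_congr rfl fun mw _ => measure_pairEvent P hP a b x y
    (fun m => hx m trivial) (fun m => hy m trivial) mw]
  rw [Finset.prod_mul_distrib, Finset.prod_mul_distrib, Finset.prod_filter, Finset.prod_filter,
    Finset.prod_filter]
end

section
/- Under the symmetric power preference distribution with positive power function P, every permutation σ of M ⊔ W and its inverse σ⁻¹ are equally likely to be stable: the Lebesgue measure of the set of (X,Y) for which σ is a stable permutation of the induced preference profile equals the Lebesgue measure of the set of (X,Y) for which σ⁻¹ is a stable permutation. -/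
open MeasureTheory

noncomputable def cubeM (δ : Type) : δ → Measure ℝ := fun _ => volume.restrict (Set.Icc (0:ℝ) 1)

instance cubeM_sf (δ : Type) (i : δ) : SigmaFinite (cubeM δ i) := by
  unfold cubeM; infer_instance

lemma cv_aux (p q : ℝ) (hp : 0 < p) (hq : 0 < q) (φ : ℝ → ENNReal) :
    ENNReal.ofReal q * ∫⁻ t in Set.Icc (0:ℝ) 1, ENNReal.ofReal (t ^ (q / p)) * φ (t ^ q) =
    ENNReal.ofReal p * ∫⁻ t in Set.Icc (0:ℝ) 1, ENNReal.ofReal (t ^ (p / q)) * φ (t ^ p) := by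
  have hr : 0 < p / q := div_pos hp hq
  rw [← restrict_Ioo_eq_restrict_Icc]
  have him : (fun v : ℝ => v ^ (p / q)) '' Set.Ioo 0 1 = Set.Ioo 0 1 := by
    ext y
    constructor
    · rintro ⟨v, ⟨h0, h1⟩, rfl⟩
      exact ⟨Real.rpow_pos_of_pos h0 _, Real.rpow_lt_one h0.le h1 hr⟩
    · rintro ⟨h0, h1⟩
      refine ⟨y ^ (p / q)⁻¹, ⟨Real.rpow_pos_of_pos h0 _, Real.rpow_lt_one h0.le h1 (inv_pos.2 hr)⟩, ?_⟩
      exact Real.rpow_inv_rpow h0.le hr.ne'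
  have hinj : Set.InjOn (fun v : ℝ => v ^ (p / q)) (Set.Ioo 0 1) := by
    intro x hx y hy h
    exact (Real.rpow_left_inj hx.1.le hy.1.le hr.ne').1 h
  have hd : ∀ x ∈ Set.Ioo (0:ℝ) 1,
      HasDerivWithinAt (fun v : ℝ => v ^ (p / q)) (p / q * x ^ (p / q - 1)) (Set.Ioo 0 1) x := by
    intro x hx
    exact (Real.hasDerivAt_rpow_const (Or.inl hx.1.ne')).hasDerivWithinAt
  have key := lintegral_image_eq_lintegral_abs_deriv_mul measurableSet_Ioo hd hinj
    (fun t => ENNReal.ofReal (t ^ (q / p)) * φ (t ^ q))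
  rw [him] at key
  rw [key, ← lintegral_const_mul' _ _ ENNReal.ofReal_ne_top,
    ← lintegral_const_mul' _ _ ENNReal.ofReal_ne_top]
  refine setLIntegral_congr_fun measurableSet_Ioo ?_
  intro x hx
  have hx0 : 0 < x := hx.1
  have e1 : (x ^ (p / q)) ^ (q / p) = x := by
    rw [← Real.rpow_mul hx0.le]
    have : p / q * (q / p) = 1 := by field_simp
    rw [this, Real.rpow_one]
  have e2 : (x ^ (p / q)) ^ q = x ^ p := by
    rw [← Real.rpow_mul hx0.le]
    have : p / q * q = p := by field_simp
    rw [this]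
  have hpos : 0 < p / q * x ^ (p / q - 1) := mul_pos hr (Real.rpow_pos_of_pos hx0 _)
  simp only [e1, e2]
  rw [abs_of_pos hpos, ← mul_assoc, ← mul_assoc, ← mul_assoc, ← ENNReal.ofReal_mul hq.le,
    ← ENNReal.ofReal_mul (by positivity), ← ENNReal.ofReal_mul hp.le]
  congr 2
  rw [Real.rpow_sub_one hx0.ne']
  field_simp

lemma inner_aux (p q : ℝ) (hp : 0 < p) (hq : 0 < q) (t : ℝ) (ht : t ∈ Set.Icc (0:ℝ) 1)
    (c : ENNReal) :
    ∫⁻ s in Set.Icc (0:ℝ) 1, (if s ^ p < t ^ q then c else 0) =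
      ENNReal.ofReal (t ^ (q / p)) * c := by
  have e : t ^ q = (t ^ (q / p)) ^ p := by
    rw [← Real.rpow_mul ht.1]
    congr 1; field_simp
  have h0 : 0 ≤ t ^ (q / p) := Real.rpow_nonneg ht.1 _
  have h1 : t ^ (q / p) ≤ 1 := Real.rpow_le_one ht.1 ht.2 (by positivity)
  have : ∫⁻ s in Set.Icc (0:ℝ) 1, (if s ^ p < t ^ q then c else 0) =
      ∫⁻ s in Set.Icc (0:ℝ) 1, (Set.Iio (t ^ (q / p))).indicator (fun _ => c) s := by
    refine setLIntegral_congr_fun measurableSet_Icc ?_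
    intro s hs
    simp only [Set.indicator, Set.mem_Iio]
    have hiff : s ^ p < t ^ q ↔ s < t ^ (q / p) := by
      rw [e, Real.rpow_lt_rpow_iff hs.1 h0 hp]
    simp only [hiff]
  rw [this, lintegral_indicator measurableSet_Iio, lintegral_const, mul_comm,
    Measure.restrict_apply_univ, Measure.restrict_apply measurableSet_Iio]
  have : Set.Iio (t ^ (q / p)) ∩ Set.Icc 0 1 = Set.Ico 0 (t ^ (q / p)) := by
    ext s
    simp only [Set.mem_inter_iff, Set.mem_Iio, Set.mem_Icc, Set.mem_Ico]
    constructor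
    · rintro ⟨h, h', _⟩; exact ⟨h', h⟩
    · rintro ⟨h, h'⟩; exact ⟨h', h, by linarith⟩
  rw [this]
  simp

lemma meas_aux {δ : Type} (i j : δ) (p q : ℝ)
    (F : ℝ → (δ → ℝ) → ENNReal) (hF : Measurable (Function.uncurry F)) :
    Measurable (fun x : δ → ℝ => if x i ^ p < x j ^ q then F (x j ^ q) x else 0) := by
  refine Measurable.ite ?_ ?_ measurable_const
  · exact measurableSet_lt (by fun_prop) (by fun_prop)
  · have : Measurable (fun x : δ → ℝ => (x j ^ q, x)) := by fun_prop
    exact hF.comp this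

lemma marg_aux {δ : Type} [Fintype δ] [DecidableEq δ] (i j : δ) (hij : i ≠ j) (p q : ℝ)
    (hp : 0 < p) (hq : 0 < q)
    (F : ℝ → (δ → ℝ) → ENNReal) (hF : Measurable (Function.uncurry F))
    (hFi : ∀ u x t, F u (Function.update x i t) = F u x)
    (hFj : ∀ u x t, F u (Function.update x j t) = F u x) (x : δ → ℝ) :
    lmarginal (cubeM δ) {j, i} (fun x => if x i ^ p < x j ^ q then F (x j ^ q) x else 0) x =
      ∫⁻ t in Set.Icc (0:ℝ) 1, ENNReal.ofReal (t ^ (q / p)) * F (t ^ q) x := by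
  rw [lmarginal_insert _ (meas_aux i j p q F hF) (by simpa using hij.symm)]
  simp only [lmarginal_singleton]
  show ∫⁻ t in Set.Icc (0:ℝ) 1, ∫⁻ s in Set.Icc (0:ℝ) 1, _ = _
  refine setLIntegral_congr_fun measurableSet_Icc ?_
  intro t ht
  simp only [hFi, hFj, Function.update_self, Function.update_of_ne hij.symm]
  exact inner_aux p q hp hq t ht _

lemma swap_aux {δ : Type} [Fintype δ] [DecidableEq δ] (i j : δ) (hij : i ≠ j) (p q : ℝ)
    (hp : 0 < p) (hq : 0 < q)
    (F : ℝ → (δ → ℝ) → ENNReal) (hF : Measurable (Function.uncurry F))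
    (hFi : ∀ u x t, F u (Function.update x i t) = F u x)
    (hFj : ∀ u x t, F u (Function.update x j t) = F u x) :
    ENNReal.ofReal q * ∫⁻ x, (if x i ^ p < x j ^ q then F (x j ^ q) x else 0)
        ∂(Measure.pi (cubeM δ)) =
    ENNReal.ofReal p * ∫⁻ x, (if x j ^ q < x i ^ p then F (x i ^ p) x else 0)
        ∂(Measure.pi (cubeM δ)) := by
  rw [← lintegral_const_mul' _ _ ENNReal.ofReal_ne_top,
    ← lintegral_const_mul' _ _ ENNReal.ofReal_ne_top]
  refine lintegral_eq_of_lmarginal_eq {j, i} ((meas_aux i j p q F hF).const_mul _)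
    ((meas_aux j i q p F hF).const_mul _) ?_
  funext x
  have h1 := marg_aux i j hij p q hp hq F hF hFi hFj x
  have h2 := marg_aux j i hij.symm q p hq hp F hF hFj hFi x
  rw [Finset.pair_comm] at h2
  unfold lmarginal at h1 h2 ⊢
  rw [lintegral_const_mul' _ _ ENNReal.ofReal_ne_top,
    lintegral_const_mul' _ _ ENNReal.ofReal_ne_top, h1, h2]
  exact cv_aux p q hp hq (fun u => F u x)

/-- The general event. -/
def Ev {δ K : Type} (e : δ → ℝ) (G : Set ((K → ℝ) × (δ → ℝ))) (s p : K → δ) : Set (δ → ℝ) :=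
  {x | (∀ k, s k = p k ∨ x (s k) ^ e (s k) < x (p k) ^ e (p k)) ∧
    ((fun k => x (p k) ^ e (p k)), x) ∈ G}

lemma step_aux {δ K : Type} [Fintype δ] [DecidableEq δ] [Fintype K] [DecidableEq K]
    (e : δ → ℝ) (he : ∀ i, 0 < e i) (G : Set ((K → ℝ) × (δ → ℝ))) (hG : MeasurableSet G)
    (s p s' p' : K → δ) (k : K)
    (hs : ∀ l, l ≠ k → s' l = s l) (hp : ∀ l, l ≠ k → p' l = p l)
    (hsk : s' k = p k) (hpk : p' k = s k)
    (hd : ∀ l, l ≠ k → s l ≠ s k ∧ s l ≠ p k ∧ p l ≠ s k ∧ p l ≠ p k)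
    (hGs : ∀ u x t, (u, Function.update x (s k) t) ∈ G ↔ (u, x) ∈ G)
    (hGp : ∀ u x t, (u, Function.update x (p k) t) ∈ G ↔ (u, x) ∈ G) :
    ENNReal.ofReal (e (p k)) * Measure.pi (cubeM δ) (Ev e G s p) =
    ENNReal.ofReal (e (s k)) * Measure.pi (cubeM δ) (Ev e G s' p') := by
  classical
  by_cases hk : s k = p k
  · have h1 : s' = s := by
      funext l; by_cases h : l = k
      · subst h; rw [hsk, hk]
      · exact hs l h
    have h2 : p' = p := by
      funext l; by_cases h : l = k
      · subst h; rw [hpk, hk]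
      · exact hp l h
    rw [h1, h2, hk]
  -- the auxiliary set
  let H : Set (ℝ × (δ → ℝ)) := {z | (∀ l, l ≠ k → (s l = p l ∨
      z.2 (s l) ^ e (s l) < z.2 (p l) ^ e (p l))) ∧
      (Function.update (fun l => z.2 (p l) ^ e (p l)) k z.1, z.2) ∈ G}
  have hH : MeasurableSet H := by
    refine MeasurableSet.inter (s₁ := {z : ℝ × (δ → ℝ) | ∀ l, l ≠ k → (s l = p l ∨
      z.2 (s l) ^ e (s l) < z.2 (p l) ^ e (p l))}) ?_ ?_
    · simp only [Set.ofPred_forall]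
      refine MeasurableSet.iInter fun l => ?_
      refine MeasurableSet.iInter fun _ => ?_
      rw [Set.ofPred_or]
      refine MeasurableSet.union (MeasurableSet.const _) ?_
      exact measurableSet_lt (by fun_prop) (by fun_prop)
    · have : Measurable (fun z : ℝ × (δ → ℝ) =>
          (Function.update (fun l => z.2 (p l) ^ e (p l)) k z.1, z.2)) := by
        refine Measurable.prodMk ?_ measurable_snd
        refine measurable_pi_lambda _ fun l => ?_
        by_cases h : l = k
        · subst h; simpa using measurable_fst
        · simp only [Function.update_of_ne h]; fun_prop
      exact this hG
  have hHs : ∀ u x t, (u, Function.update x (s k) t) ∈ H ↔ (u, x) ∈ H := by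
    intro u x t
    have e1 : (Function.update (fun l => (Function.update x (s k) t) (p l) ^ e (p l)) k u) =
        (Function.update (fun l => x (p l) ^ e (p l)) k u) := by
      funext l
      by_cases h : l = k
      · subst h; simp
      · simp [Function.update_of_ne h, Function.update_of_ne (hd l h).2.2.1]
    show (_ ∧ _) ↔ (_ ∧ _)
    refine and_congr ?_ ?_
    · refine forall_congr' fun l => forall_congr' fun h => ?_
      simp only [Function.update_of_ne (hd l h).2.2.1, Function.update_of_ne (hd l h).1]
    · simp only [e1]; exact hGs _ _ _
  have hHp : ∀ u x t, (u, Function.update x (p k) t) ∈ H ↔ (u, x) ∈ H := by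
    intro u x t
    have e1 : (Function.update (fun l => (Function.update x (p k) t) (p l) ^ e (p l)) k u) =
        (Function.update (fun l => x (p l) ^ e (p l)) k u) := by
      funext l
      by_cases h : l = k
      · subst h; simp
      · simp [Function.update_of_ne h, Function.update_of_ne (hd l h).2.2.2]
    show (_ ∧ _) ↔ (_ ∧ _)
    refine and_congr ?_ ?_
    · refine forall_congr' fun l => forall_congr' fun h => ?_
      simp only [Function.update_of_ne (hd l h).2.2.2, Function.update_of_ne (hd l h).2.1]
    · simp only [e1]; exact hGp _ _ _
  have hE : ∀ x, x ∈ Ev e G s p ↔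
      x (s k) ^ e (s k) < x (p k) ^ e (p k) ∧ (x (p k) ^ e (p k), x) ∈ H := by
    intro x
    have e1 : Function.update (fun l => x (p l) ^ e (p l)) k (x (p k) ^ e (p k)) =
        (fun l => x (p l) ^ e (p l)) := Function.update_eq_self k _
    simp only [Ev, H, Set.mem_ofPred_eq, e1]
    constructor
    · rintro ⟨h, h'⟩
      exact ⟨(h k).resolve_left hk, fun l _ => h l, h'⟩
    · rintro ⟨h, h', h''⟩
      refine ⟨fun l => ?_, h''⟩
      by_cases hl : l = k
      · subst hl; exact Or.inr h
      · exact h' l hl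
  have hE' : ∀ x, x ∈ Ev e G s' p' ↔
      x (p k) ^ e (p k) < x (s k) ^ e (s k) ∧ (x (s k) ^ e (s k), x) ∈ H := by
    intro x
    have e1 : Function.update (fun l => x (p l) ^ e (p l)) k (x (s k) ^ e (s k)) =
        (fun l => x (p' l) ^ e (p' l)) := by
      funext l
      by_cases hl : l = k
      · subst hl; simp [hpk]
      · simp [Function.update_of_ne hl, hp l hl]
    simp only [Ev, H, Set.mem_ofPred_eq, e1]
    constructor
    · rintro ⟨h, h'⟩
      refine ⟨?_, fun l hl => ?_, h'⟩
      · have := h k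
        rw [hsk, hpk] at this
        exact this.resolve_left (Ne.symm hk)
      · have := h l
        rwa [hs l hl, hp l hl] at this
    · rintro ⟨h, h', h''⟩
      refine ⟨fun l => ?_, h''⟩
      by_cases hl : l = k
      · subst hl; rw [hsk, hpk]; exact Or.inr h
      · rw [hs l hl, hp l hl]; exact h' l hl
  have key := swap_aux (s k) (p k) hk (e (s k)) (e (p k)) (he _) (he _)
    (fun u x => H.indicator (fun _ => 1) (u, x))
    (by exact (measurable_const.indicator hH))
    (by intro u x t; simp only [Set.indicator, hHs]) (by intro u x t; simp only [Set.indicator, hHp])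
  have hHm : ∀ i : δ, Measurable (fun x : δ → ℝ => (x i ^ e i, x)) := by intro i; fun_prop
  have hm : MeasurableSet (Ev e G s p) := by
    have : Ev e G s p = {x | x (s k) ^ e (s k) < x (p k) ^ e (p k)} ∩
        (fun x : δ → ℝ => (x (p k) ^ e (p k), x)) ⁻¹' H := by
      ext x; exact hE x
    rw [this]
    exact (measurableSet_lt (by fun_prop) (by fun_prop)).inter (hHm _ hH)
  have hm' : MeasurableSet (Ev e G s' p') := by
    have : Ev e G s' p' = {x | x (p k) ^ e (p k) < x (s k) ^ e (s k)} ∩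
        (fun x : δ → ℝ => (x (s k) ^ e (s k), x)) ⁻¹' H := by
      ext x; exact hE' x
    rw [this]
    exact (measurableSet_lt (by fun_prop) (by fun_prop)).inter (hHm _ hH)
  rw [← lintegral_indicator_one hm, ← lintegral_indicator_one hm']
  convert key using 4 with x x
  · simp only [Set.indicator, hE, Pi.one_apply, ite_and]
  · simp only [Set.indicator, hE', Pi.one_apply, ite_and]

lemma all_aux {δ K : Type} [Fintype δ] [DecidableEq δ] [Fintype K] [DecidableEq K]
    (e : δ → ℝ) (he : ∀ i, 0 < e i) (G : Set ((K → ℝ) × (δ → ℝ))) (hG : MeasurableSet G)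
    (s p : K → δ)
    (hd : ∀ l k, l ≠ k → s l ≠ s k ∧ s l ≠ p k ∧ p l ≠ s k ∧ p l ≠ p k)
    (hGs : ∀ k u x t, (u, Function.update x (s k) t) ∈ G ↔ (u, x) ∈ G)
    (hGp : ∀ k u x t, (u, Function.update x (p k) t) ∈ G ↔ (u, x) ∈ G) (S : Finset K) :
    (∏ k ∈ S, ENNReal.ofReal (e (p k))) * Measure.pi (cubeM δ) (Ev e G s p) =
    (∏ k ∈ S, ENNReal.ofReal (e (s k))) * Measure.pi (cubeM δ)
      (Ev e G (fun k => if k ∈ S then p k else s k) (fun k => if k ∈ S then s k else p k)) := by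
  induction S using Finset.induction_on with
  | empty => simp
  | insert k S hk ih =>
    rw [Finset.prod_insert hk, Finset.prod_insert hk, mul_assoc, ih, mul_left_comm]
    have := step_aux e he G hG (fun k => if k ∈ S then p k else s k)
      (fun k => if k ∈ S then s k else p k)
      (fun l => if l ∈ insert k S then p l else s l)
      (fun l => if l ∈ insert k S then s l else p l) k
      (by intro l hl; simp [hl]) (by intro l hl; simp [hl]) (by simp [hk]) (by simp [hk])
      (by
        intro l hl
        have := hd l k hl
        simp only [hk, if_false]
        by_cases h : l ∈ S <;> simp [h, this])
      (by simpa [hk] using hGs k) (by simpa [hk] using hGp k)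
    simp only [hk, if_false] at this
    rw [this]
    ring

/-- No blocking pair. -/
def NB {N : ℕ} (P : Fin N × Fin N → ℝ) (a b : Fin N ≃ Fin N) :
    Set ((Fin N ⊕ Fin N → ℝ) × ((Fin N × Fin N) ⊕ (Fin N × Fin N) → ℝ)) :=
  {z | ∀ m w, a m ≠ w → b w ≠ m →
    ¬ (z.2 (Sum.inl (m, w)) ^ P (m, w) < z.1 (Sum.inl m) ∧
       z.2 (Sum.inr (m, w)) ^ P (m, w) < z.1 (Sum.inr w))}

/-- successor coordinates -/
def sc {N : ℕ} (a b : Fin N ≃ Fin N) : Fin N ⊕ Fin N → (Fin N × Fin N) ⊕ (Fin N × Fin N) :=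
  Sum.elim (fun m => Sum.inl (m, a m)) (fun w => Sum.inr (b w, w))

lemma meas_NB {N : ℕ} (P : Fin N × Fin N → ℝ) (a b : Fin N ≃ Fin N) :
    MeasurableSet (NB P a b) := by
  unfold NB
  simp only [Set.ofPred_forall]
  refine MeasurableSet.iInter fun m => MeasurableSet.iInter fun w =>
    MeasurableSet.iInter fun _ => MeasurableSet.iInter fun _ => ?_
  rw [← Set.compl_ofPred, Set.ofPred_and]
  refine MeasurableSet.compl ?_
  exact (measurableSet_lt (by fun_prop) (by fun_prop)).inter
    (measurableSet_lt (by fun_prop) (by fun_prop))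

lemma NB_symm {N : ℕ} (P : Fin N × Fin N → ℝ) (a b : Fin N ≃ Fin N) :
    NB P b.symm a.symm = NB P a b := by
  ext z
  simp only [NB, Set.mem_ofPred_eq]
  refine forall_congr' fun m => forall_congr' fun w => ?_
  have h1 : b.symm m ≠ w ↔ b w ≠ m := by
    rw [Ne, Equiv.symm_apply_eq, eq_comm]
  have h2 : a.symm w ≠ m ↔ a m ≠ w := by
    rw [Ne, Equiv.symm_apply_eq, eq_comm]
  rw [h1, h2]
  tauto

lemma NB_upd {N : ℕ} (P : Fin N × Fin N → ℝ) (a b : Fin N ≃ Fin N) (k : Fin N ⊕ Fin N)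
    (u : Fin N ⊕ Fin N → ℝ) (x : (Fin N × Fin N) ⊕ (Fin N × Fin N) → ℝ) (t : ℝ) :
    (u, Function.update x (sc a b k) t) ∈ NB P a b ↔ (u, x) ∈ NB P a b := by
  simp only [NB, Set.mem_ofPred_eq]
  refine forall_congr' fun m => forall_congr' fun w => forall_congr' fun h1 =>
    forall_congr' fun h2 => ?_
  have e1 : (Sum.inl (m, w) : (Fin N × Fin N) ⊕ (Fin N × Fin N)) ≠ sc a b k := by
    rcases k with k | k
    · simp only [sc, Sum.elim_inl, ne_eq, Sum.inl.injEq, Prod.mk.injEq, not_and]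
      rintro rfl h; exact h1 h.symm
    · simp [sc]
  have e2 : (Sum.inr (m, w) : (Fin N × Fin N) ⊕ (Fin N × Fin N)) ≠ sc a b k := by
    rcases k with k | k
    · simp [sc]
    · simp only [sc, Sum.elim_inr, ne_eq, Sum.inr.injEq, Prod.mk.injEq, not_and]
      rintro h rfl; exact h2 h.symm
  rw [Function.update_of_ne e1, Function.update_of_ne e2]

lemma unif_eq {N : ℕ} (P : Fin N × Fin N → ℝ) (a b : Fin N ≃ Fin N) :
    unifBox N {XY | IsStablePerm P XY a b} =
      Measure.pi (cubeM ((Fin N × Fin N) ⊕ (Fin N × Fin N)))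
        (Ev (Sum.elim P P) (NB P a b) (sc a b) (sc b.symm a.symm)) := by
  have h := measurePreserving_sumPiEquivProdPi (X := fun _ => ℝ)
    (cubeM ((Fin N × Fin N) ⊕ (Fin N × Fin N)))
  have h' := h.measure_preimage_equiv {XY | IsStablePerm P XY a b}
  have : unifBox N = (Measure.pi fun i => cubeM ((Fin N × Fin N) ⊕ (Fin N × Fin N)) (Sum.inl i)).prod
     (Measure.pi fun i => cubeM ((Fin N × Fin N) ⊕ (Fin N × Fin N)) (Sum.inr i)) := rfl
  rw [this, ← h']
  congr 1
  ext x
  show IsStablePerm P (fun i => x (Sum.inl i), fun i => x (Sum.inr i)) a b ↔ _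
  simp only [IsStablePerm, Ev, NB, sc, PrefM, PrefW, Set.mem_ofPred_eq, Sum.forall, Sum.elim_inl,
    Sum.elim_inr, Sum.inl.injEq, Sum.inr.injEq, Prod.mk.injEq, true_and, and_true, and_assoc]
  refine and_congr Iff.rfl (and_congr Iff.rfl ?_)
  push Not
  rfl

/-- Under the symmetric power preference distribution, a permutation `σ` (encoded by the
pair `(a, b)`) and its inverse `σ⁻¹` (encoded by the pair `(b.symm, a.symm)`) are equally
likely to be stable. -/
theorem prob_stablePerm_inv (N : ℕ) (hN : 1 ≤ N) (P : Fin N × Fin N → ℝ)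
    (hP : ∀ mw, 0 < P mw) (a b : Fin N ≃ Fin N) :
    unifBox N {XY | IsStablePerm P XY a b} =
      unifBox N {XY | IsStablePerm P XY b.symm a.symm} := by
  rw [unif_eq, unif_eq, NB_symm, Equiv.symm_symm, Equiv.symm_symm]
  have he : ∀ i, 0 < Sum.elim P P i := by rintro (i | i) <;> exact hP i
  have key := all_aux (Sum.elim P P) he (NB P a b) (meas_NB P a b) (sc a b) (sc b.symm a.symm)
    (by
      rintro (l | l) (k | k) h <;> simp only [ne_eq, Sum.inl.injEq, Sum.inr.injEq] at h <;>
        simp [sc, h])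
    (NB_upd P a b)
    (by
      intro k u x t
      rw [← NB_symm]; exact NB_upd P _ _ k u x t)
    Finset.univ
  simp only [Finset.mem_univ, if_true] at key
  have hc : (∏ k, ENNReal.ofReal (Sum.elim P P (sc b.symm a.symm k))) =
      ∏ k, ENNReal.ofReal (Sum.elim P P (sc a b k)) := by
    simp only [Fintype.prod_sum_type, sc, Sum.elim_inl, Sum.elim_inr]
    rw [mul_comm]
    congr 1
    · refine Fintype.prod_equiv a.symm _ _ fun w => ?_
      simp
    · refine Fintype.prod_equiv b.symm _ _ fun w => ?_
      simp
  rw [hc] at key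
  refine (ENNReal.mul_right_inj ?_ ?_).1 key
  · rw [Finset.prod_ne_zero_iff]
    intro k _
    simpa using he _
  · exact ENNReal.prod_ne_top fun k _ => ENNReal.ofReal_ne_top
end

section
/- Under the symmetric power preference distribution with positive power function P, for every matching μ : M ≃ W: the probability that μ is stable and women-optimal equals the sum, over all permutations σ of M ⊔ W whose restriction to M agrees with μ, of (−1)^{C(σ)} times the probability that σ is a stable permutation, where C(σ) is the number of cycles of σ of length greater than 2; symmetrically, the probability that μ is stable and men-optimal equals the sum over all permutations σ whose restriction to W agrees with μ⁻¹ of (−1)^{C(σ)} times the probability that σ is stable. -/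
open MeasureTheory

/-- `C(σ)`: the number of cycles of `σ` of length greater than `2`.  The cycles of the
side-exchanging permutation `σ = (a, b)` through a man `m` are `m → a m → b (a m) → ⋯`,
so they correspond to the orbits of `a.trans b : M ≃ M` (an orbit of size `k` giving a
cycle of length `2k`); `C(σ)` is the number of nontrivial cycles of `a.trans b`,
i.e. `Equiv.Perm.cycleType (a.trans b) |>.card`. -/
def cyclesGtTwo {N : ℕ} (a b : Fin N ≃ Fin N) : ℕ :=
  Equiv.Perm.cycleType (a.trans b) |>.card

namespace StableAux

open Finset Matrix

variable {N : ℕ}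

def Stab (f g : Fin N → Fin N → ℝ) (μ : Fin N ≃ Fin N) : Prop :=
  ¬ ∃ m w, f m w < f m (μ m) ∧ g w m < g w (μ.symm w)

def WOpt (f g : Fin N → Fin N → ℝ) (μ : Fin N ≃ Fin N) : Prop :=
  Stab f g μ ∧ ∀ μ' : Fin N ≃ Fin N, Stab f g μ' →
    ∀ w, μ.symm w = μ'.symm w ∨ g w (μ.symm w) < g w (μ'.symm w)

def SP (f g : Fin N → Fin N → ℝ) (a b : Fin N ≃ Fin N) : Prop :=
  (∀ m, a m = b.symm m ∨ f m (a m) < f m (b.symm m)) ∧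
  (∀ w, b w = a.symm w ∨ g w (b w) < g w (a.symm w)) ∧
  ¬ ∃ m w, a m ≠ w ∧ b w ≠ m ∧ f m w < f m (b.symm m) ∧ g w m < g w (a.symm w)

/-- `w` is the favourite woman of `m` among those who prefer `m` to their `μ`-partner. -/
def IsNext (f g : Fin N → Fin N → ℝ) (μ : Fin N ≃ Fin N) (m w : Fin N) : Prop :=
  g w m < g w (μ.symm w) ∧ ∀ w', g w' m < g w' (μ.symm w') → f m w ≤ f m w'

lemma not_isNext_self (f g : Fin N → Fin N → ℝ) (μ : Fin N ≃ Fin N) (m : Fin N) :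
    ¬ IsNext f g μ m (μ m) := by
  rintro ⟨h, -⟩
  simp at h

lemma stab_of_SP {f g : Fin N → Fin N → ℝ} {a b : Fin N ≃ Fin N} (h : SP f g a b) :
    Stab f g a := by
  obtain ⟨h1, h2, h3⟩ := h
  rintro ⟨m, w, hm, hw⟩
  have hm' : f m w < f m (b.symm m) := by
    rcases h1 m with h | h
    · rwa [h] at hm
    · exact hm.trans h
  refine h3 ⟨m, w, ?_, ?_, hm', hw⟩
  · rintro rfl; simp at hw
  · rintro rfl; simp at hm'

lemma stab_of_SP' {f g : Fin N → Fin N → ℝ} {a b : Fin N ≃ Fin N} (h : SP f g a b) :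
    Stab f g b.symm := by
  obtain ⟨h1, h2, h3⟩ := h
  rintro ⟨m, w, hm, hw⟩
  rw [Equiv.symm_symm] at hw
  have hw' : g w m < g w (a.symm w) := by
    rcases h2 w with h | h
    · rwa [h] at hw
    · exact hw.trans h
  refine h3 ⟨m, w, ?_, ?_, hm, hw'⟩
  · rintro rfl; simp at hw'
  · rintro rfl; simp at hm

lemma SP_iff {f g : Fin N → Fin N → ℝ} (hf : ∀ m, Function.Injective (f m))
    {μ b : Fin N ≃ Fin N} (hμ : Stab f g μ) :
    SP f g μ b ↔ ∀ m, b.symm m = μ m ∨ IsNext f g μ m (b.symm m) := by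
  constructor
  · rintro ⟨h1, h2, h3⟩ m
    by_cases hm : b.symm m = μ m
    · exact Or.inl hm
    refine Or.inr ⟨?_, ?_⟩
    · rcases h2 (b.symm m) with h | h
      · rw [Equiv.apply_symm_apply, Equiv.eq_symm_apply] at h
        exact absurd h.symm hm
      · simpa using h
    · intro w' hw'
      by_contra hlt
      push Not at hlt
      refine h3 ⟨m, w', ?_, ?_, hlt, hw'⟩
      · rintro rfl; simp at hw'
      · rintro rfl; simp at hlt
  · intro h
    refine ⟨fun m => ?_, fun w => ?_, ?_⟩
    · rcases h m with h | h
      · exact Or.inl h.symm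
      · right
        have hle : f m (μ m) ≤ f m (b.symm m) := by
          by_contra hlt
          push Not at hlt
          exact hμ ⟨m, _, hlt, h.1⟩
        refine lt_of_le_of_ne hle fun he => ?_
        have := hf m he
        rw [← this] at h
        exact not_isNext_self f g μ m h
    · rcases h (b w) with h | h
      · left
        rw [Equiv.symm_apply_apply] at h
        rw [Equiv.eq_symm_apply, ← h]
      · right
        simpa using h.1
    · rintro ⟨m, w, -, -, hm, hw⟩
      rcases h m with h | h
      · rw [h] at hm
        exact hμ ⟨m, w, hm, hw⟩
      · exact absurd (h.2 w hw) (not_le.mpr hm)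

lemma neg_one_pow_cycles (π : Equiv.Perm (Fin N)) :
    (-1 : ℝ) ^ (π.cycleType.card) =
      ((Equiv.Perm.sign π : ℤ) : ℝ) * ∏ m, (if π m = m then (1 : ℝ) else -1) := by
  have h1 : ∏ m, (if π m = m then (1 : ℝ) else -1) = (-1) ^ π.support.card := by
    rw [Finset.prod_ite]
    simp only [prod_const_one, prod_const, one_mul]
    congr 2
  rw [h1, Equiv.Perm.sign_of_cycleType, Equiv.Perm.sum_cycleType]
  push_cast
  rw [pow_add, mul_right_comm, ← mul_pow]
  simp

open Classical in
/-- Identity minus the matrix of the rotation map. -/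
noncomputable def B (f g : Fin N → Fin N → ℝ) (μ : Fin N ≃ Fin N) : Matrix (Fin N) (Fin N) ℝ :=
  fun i m => (if i = m then 1 else 0) - (if IsNext f g μ m (μ i) then 1 else 0)

open Classical in
lemma sum_eq_det {f g : Fin N → Fin N → ℝ} (hf : ∀ m, Function.Injective (f m))
    {μ : Fin N ≃ Fin N} (hμ : Stab f g μ) :
    ∑ b : Fin N ≃ Fin N, (-1 : ℝ) ^ cyclesGtTwo μ b * (if SP f g μ b then 1 else 0) =
      (B f g μ).det := by
  rw [Matrix.det_apply']
  refine Fintype.sum_equiv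
    ((Equiv.equivCongr μ.symm (Equiv.refl _)).trans (Equiv.inv (Equiv.Perm (Fin N)))) _ _ ?_
  intro b
  set π : Equiv.Perm (Fin N) := ((Equiv.equivCongr μ.symm (Equiv.refl _)).trans
    (Equiv.inv (Equiv.Perm (Fin N)))) b with hπ
  have hπ' : π = (μ.trans b)⁻¹ := by
    rw [hπ]; rfl
  have hb : ∀ m, b.symm m = μ (π m) := by
    intro m
    rw [hπ']
    change _ = μ (μ.symm (b.symm m))
    simp
  have hc : cyclesGtTwo μ b = π.cycleType.card := by
    rw [hπ', Equiv.Perm.cycleType_inv]; rfl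
  rw [hc, neg_one_pow_cycles, mul_assoc, SP_iff hf hμ]
  congr 1
  simp only [hb, EmbeddingLike.apply_eq_iff_eq]
  split_ifs with h
  · rw [mul_one]
    refine Finset.prod_congr rfl fun m _ => ?_
    rcases h m with h | h
    · simp [B, h, not_isNext_self]
    · have : π m ≠ m := by
        intro h'
        rw [h'] at h
        exact not_isNext_self f g μ m h
      simp [B, h, this]
  · rw [mul_zero]
    push Not at h
    obtain ⟨m, h1, h2⟩ := h
    symm
    refine Finset.prod_eq_zero (Finset.mem_univ m) ?_
    simp [B, h1, h2]

/-- Non-optimal stable matchings admit a set of men on which the rotation map is bijective. -/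
lemma det_eq_zero {f g : Fin N → Fin N → ℝ} (hf : ∀ m, Function.Injective (f m))
    (hg : ∀ w, Function.Injective (g w))
    {μ : Fin N ≃ Fin N} (hμ : Stab f g μ) (hopt : ¬ WOpt f g μ) : (B f g μ).det = 0 := by
  classical
  obtain ⟨μ', hμ', w₀, hw₀, hlt₀⟩ : ∃ μ' : Fin N ≃ Fin N, Stab f g μ' ∧ ∃ w,
      μ.symm w ≠ μ'.symm w ∧ ¬ g w (μ.symm w) < g w (μ'.symm w) := by
    by_contra hcon
    refine hopt ⟨hμ, fun μ' hμ' w => ?_⟩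
    by_contra hcon2
    push Not at hcon2
    exact hcon ⟨μ', hμ', w, hcon2.1, not_lt.mpr hcon2.2⟩
  let A : Finset (Fin N) := univ.filter fun m => f m (μ m) < f m (μ' m)
  let W' : Finset (Fin N) := univ.filter fun w => g w (μ'.symm w) < g w (μ.symm w)
  have hw₀W : w₀ ∈ W' := by
    simp only [W', mem_filter, mem_univ, true_and]
    exact lt_of_le_of_ne (not_lt.mp hlt₀) fun h => hw₀ (hg _ h).symm
  have hWA : ∀ w ∈ W', μ'.symm w ∈ A := by
    intro w hw
    simp only [W', A, mem_filter, mem_univ, true_and, Equiv.apply_symm_apply] at hw ⊢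
    refine lt_of_le_of_ne (not_lt.mp fun h => hμ ⟨_, w, h, hw⟩) fun h => ?_
    have := hf _ h
    rw [← Equiv.eq_symm_apply] at this
    rw [this] at hw
    exact lt_irrefl _ hw
  have hAW : ∀ m ∈ A, μ m ∈ W' := by
    intro m hm
    simp only [W', A, mem_filter, mem_univ, true_and, Equiv.symm_apply_apply] at hm ⊢
    refine lt_of_le_of_ne (not_lt.mp fun h => hμ' ⟨m, _, hm, h⟩) fun h => ?_
    have := hg _ h
    rw [Equiv.symm_apply_eq] at this
    rw [this] at hm
    exact lt_irrefl _ hm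
  have hcard : W'.card ≤ A.card :=
    Finset.card_le_card_of_injOn μ'.symm hWA μ'.symm.injective.injOn
  have himg : A.image μ = W' := by
    refine Finset.eq_of_subset_of_card_le ?_ ?_
    · intro w hw
      obtain ⟨m, hm, rfl⟩ := Finset.mem_image.mp hw
      exact hAW m hm
    · rwa [Finset.card_image_of_injective _ μ.injective]
  have hWA' : ∀ w ∈ W', μ.symm w ∈ A := by
    intro w hw
    rw [← himg] at hw
    obtain ⟨m, hm, rfl⟩ := Finset.mem_image.mp hw
    simpa using hm
  have hcard' : A.card ≤ W'.card :=
    Finset.card_le_card_of_injOn μ hAW μ.injective.injOn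
  have himg' : W'.image μ'.symm = A := by
    refine Finset.eq_of_subset_of_card_le ?_ ?_
    · intro m hm
      obtain ⟨w, hw, rfl⟩ := Finset.mem_image.mp hm
      exact hWA w hw
    · rwa [Finset.card_image_of_injective _ μ'.symm.injective]
  have hAW' : ∀ m ∈ A, μ' m ∈ W' := by
    intro m hm
    rw [← himg'] at hm
    obtain ⟨w, hw, rfl⟩ := Finset.mem_image.mp hm
    simpa using hw
  have hnext : ∀ m ∈ A, ∃ i ∈ A, IsNext f g μ m (μ i) := by
    intro m hm
    have hmW := hAW' m hm
    have hcand : g (μ' m) m < g (μ' m) (μ.symm (μ' m)) := by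
      simpa [W'] using hmW
    obtain ⟨w, hw, hmin⟩ := Finset.exists_min_image
      (univ.filter fun w => g w m < g w (μ.symm w)) (f m) ⟨μ' m, by simpa using hcand⟩
    simp only [mem_filter, mem_univ, true_and] at hw hmin
    have hwW : w ∈ W' := by
      rcases (hmin _ hcand).lt_or_eq with h | h
      · simp only [W', mem_filter, mem_univ, true_and]
        exact lt_of_le_of_lt (not_lt.mp fun h' => hμ' ⟨m, w, h, h'⟩) hw
      · rw [hf m h]; exact hmW
    refine ⟨μ.symm w, hWA' w hwW, ?_⟩
    rw [Equiv.apply_symm_apply]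
    exact ⟨hw, hmin⟩
  have huniq : ∀ m i j, IsNext f g μ m (μ i) → IsNext f g μ m (μ j) → i = j := by
    intro m i j hi hj
    exact μ.injective (hf m (le_antisymm (hi.2 _ hj.1) (hj.2 _ hi.1)))
  choose! T hTA hT using hnext
  -- a minimal nonempty `T`-invariant subset of `A`
  obtain ⟨C, hC, hCmin⟩ := Finset.exists_min_image
    (A.powerset.filter fun C => C.Nonempty ∧ ∀ m ∈ C, T m ∈ C) Finset.card
    ⟨A, by simpa using ⟨⟨_, hWA _ hw₀W⟩, hTA⟩⟩
  simp only [mem_filter, mem_powerset] at hC hCmin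
  obtain ⟨hCA, hCne, hCT⟩ := hC
  have hsub : C.image T ⊆ C := by
    intro i hi
    obtain ⟨m, hm, rfl⟩ := Finset.mem_image.mp hi
    exact hCT m hm
  have hle : C.card ≤ (C.image T).card :=
    hCmin _ ⟨hsub.trans hCA, hCne.image T, fun m hm =>
      Finset.mem_image_of_mem T (hsub hm)⟩
  have hCeq : C.image T = C := Finset.eq_of_subset_of_card_le hsub hle
  have hinj : Set.InjOn T C :=
    Finset.card_image_iff.mp (le_antisymm Finset.card_image_le hle)
  rw [← Matrix.exists_mulVec_eq_zero_iff]
  refine ⟨fun m => if m ∈ C then 1 else 0, ?_, ?_⟩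
  · obtain ⟨m, hm⟩ := hCne
    intro h
    have := congrFun h m
    simp [hm] at this
  · funext i
    have h1 : (B f g μ *ᵥ fun m => if m ∈ C then (1 : ℝ) else 0) i =
        ∑ m ∈ C, ((if i = m then (1 : ℝ) else 0) - (if i = T m then 1 else 0)) := by
      simp only [Matrix.mulVec, dotProduct, mul_ite, mul_one, mul_zero]
      rw [← Finset.sum_filter]
      refine Finset.sum_congr (by simp) fun m hm => ?_
      have hm : m ∈ C := by simpa using hm
      have : IsNext f g μ m (μ i) ↔ i = T m :=
        ⟨fun h => huniq m _ _ h (hT m (hCA hm)), fun h => h ▸ hT m (hCA hm)⟩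
      simp [B, this]
    have h2 : ∑ m ∈ C, (if i = T m then (1 : ℝ) else 0) =
        ∑ m ∈ C, (if i = m then (1 : ℝ) else 0) := by
      conv_rhs => rw [← hCeq, Finset.sum_image hinj]
    rw [h1, Finset.sum_sub_distrib, h2, sub_self]
    rfl

open Classical in
lemma pathwise {f g : Fin N → Fin N → ℝ} (hf : ∀ m, Function.Injective (f m))
    (hg : ∀ w, Function.Injective (g w)) (μ : Fin N ≃ Fin N) :
    (if WOpt f g μ then (1 : ℝ) else 0) =
    ∑ b : Fin N ≃ Fin N, (-1 : ℝ) ^ cyclesGtTwo μ b * (if SP f g μ b then 1 else 0) := by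
  by_cases hμ : Stab f g μ
  · by_cases hopt : WOpt f g μ
    · rw [if_pos hopt, Finset.sum_eq_single μ.symm]
      · rw [if_pos ((SP_iff hf hμ).mpr fun m => Or.inl rfl)]
        have h1 : μ.trans μ.symm = (1 : Equiv.Perm (Fin N)) := by
          ext1 x; simp
        rw [cyclesGtTwo, h1, Equiv.Perm.cycleType_one]
        simp
      · intro b _ hb
        rw [if_neg, mul_zero]
        intro h
        apply hb
        have h2 := hopt.2 _ (stab_of_SP' h)
        ext1 w
        rcases h2 w with h' | h'
        · exact h'.symm
        · rcases h.2.1 w with h'' | h''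
          · exact h''
          · exact absurd (h'.trans h'') (lt_irrefl _)
      · simp
    · rw [if_neg hopt, sum_eq_det hf hμ, det_eq_zero hf hg hμ hopt]
  · rw [if_neg fun h => hμ h.1]
    symm
    refine Finset.sum_eq_zero fun b _ => ?_
    rw [if_neg fun h => hμ (stab_of_SP h), mul_zero]

lemma SP_swap (f g : Fin N → Fin N → ℝ) (a b : Fin N ≃ Fin N) : SP g f b a ↔ SP f g a b := by
  constructor
  · rintro ⟨h1, h2, h3⟩
    exact ⟨h2, h1, fun ⟨m, w, ha, hb, hc, hd⟩ => h3 ⟨w, m, hb, ha, hd, hc⟩⟩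
  · rintro ⟨h1, h2, h3⟩
    exact ⟨h2, h1, fun ⟨m, w, ha, hb, hc, hd⟩ => h3 ⟨w, m, hb, ha, hd, hc⟩⟩

lemma cycles_swap (a b : Fin N ≃ Fin N) : cyclesGtTwo a b = cyclesGtTwo b a := by
  unfold cyclesGtTwo
  have h := Equiv.Perm.cycleType_conj (σ := (a.trans b : Equiv.Perm (Fin N)))
    (τ := (a : Equiv.Perm (Fin N)))
  rw [← h]
  congr 2
  ext1 x
  simp [Equiv.Perm.mul_apply]

noncomputable def fM (P X : Fin N × Fin N → ℝ) (m w : Fin N) : ℝ := X (m, w) ^ P (m, w)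
noncomputable def gW (P Y : Fin N × Fin N → ℝ) (w m : Fin N) : ℝ := Y (m, w) ^ P (m, w)

lemma stab_symm (f g : Fin N → Fin N → ℝ) (μ : Fin N ≃ Fin N) :
    Stab g f μ.symm ↔ Stab f g μ := by
  unfold Stab
  rw [not_iff_not]
  constructor
  · rintro ⟨w, m, h1, h2⟩; exact ⟨m, w, h2, h1⟩
  · rintro ⟨w, m, h1, h2⟩; exact ⟨m, w, h2, h1⟩

lemma women_iff (P : Fin N × Fin N → ℝ) (XY) (μ : Fin N ≃ Fin N) :
    IsWomenOptimal P XY μ ↔ WOpt (fM P XY.1) (gW P XY.2) μ := Iff.rfl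

lemma perm_iff (P : Fin N × Fin N → ℝ) (XY) (a b : Fin N ≃ Fin N) :
    IsStablePerm P XY a b ↔ SP (fM P XY.1) (gW P XY.2) a b := Iff.rfl

lemma men_iff (P : Fin N × Fin N → ℝ) (XY) (μ : Fin N ≃ Fin N) :
    IsMenOptimal P XY μ ↔ WOpt (gW P XY.2) (fM P XY.1) μ.symm := by
  have hs : ∀ ν, IsStable P XY ν ↔ Stab (gW P XY.2) (fM P XY.1) ν.symm :=
    fun ν => (stab_symm (fM P XY.1) (gW P XY.2) ν).symm
  constructor
  · rintro ⟨h1, h2⟩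
    refine ⟨(hs μ).mp h1, fun μ' hμ' m => h2 μ'.symm ((hs _).mpr hμ') m⟩
  · rintro ⟨h1, h2⟩
    refine ⟨(hs μ).mpr h1, fun μ' hμ' m => h2 μ'.symm ((hs _).mp hμ') m⟩

instance : IsProbabilityMeasure (volume.restrict (Set.Icc (0:ℝ) 1)) := ⟨by simp⟩

instance : IsProbabilityMeasure (unifBox N) := by unfold unifBox; infer_instance

lemma ae_ne {ι : Type*} [Fintype ι] (P : ι → ℝ) (hP : ∀ i, 0 < P i) {i j : ι} (hij : i ≠ j) :
    ∀ᵐ X ∂(Measure.pi fun _ : ι => volume.restrict (Set.Icc (0:ℝ) 1)),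
      X i ^ P i ≠ X j ^ P j := by
  set ν : Measure ℝ := volume.restrict (Set.Icc (0:ℝ) 1) with hν
  have hind := (ProbabilityTheory.iIndepFun_pi (μ := fun _ : ι => ν)
    (X := fun _ x => x) (fun _ => aemeasurable_id)).indepFun hij
  rw [ProbabilityTheory.indepFun_iff_map_prod_eq_prod_map_map
    (measurable_pi_apply i).aemeasurable (measurable_pi_apply j).aemeasurable] at hind
  rw [(measurePreserving_eval (fun _ : ι => ν) i).map_eq,
    (measurePreserving_eval (fun _ : ι => ν) j).map_eq] at hind
  have hmeas : MeasurableSet {p : ℝ × ℝ | p.1 = (p.2 ^ P j) ^ (P i)⁻¹} :=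
    measurableSet_eq_fun measurable_fst ((measurable_snd.pow_const _).pow_const _)
  have hnull : (ν.prod ν) {p : ℝ × ℝ | p.1 = (p.2 ^ P j) ^ (P i)⁻¹} = 0 := by
    rw [Measure.prod_apply_symm hmeas]
    have : ∀ y : ℝ, ν ((fun x => (x, y)) ⁻¹' {p : ℝ × ℝ | p.1 = (p.2 ^ P j) ^ (P i)⁻¹}) = 0 := by
      intro y
      exact measure_singleton (μ := ν) ((y ^ P j) ^ (P i)⁻¹)
    simp [this]
  have hpos : ∀ᵐ X ∂(Measure.pi fun _ : ι => ν), 0 ≤ X i := by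
    refine (measurePreserving_eval (fun _ : ι => ν) i).quasiMeasurePreserving.ae
      (p := fun x => 0 ≤ x) ?_
    exact (ae_restrict_mem measurableSet_Icc).mono fun x hx => hx.1
  have hae : ∀ᵐ X ∂(Measure.pi fun _ : ι => ν), X i ≠ (X j ^ P j) ^ (P i)⁻¹ := by
    rw [← hind, Measure.map_apply ((measurable_pi_apply i).prodMk (measurable_pi_apply j)) hmeas]
      at hnull
    rw [ae_iff]
    simpa using hnull
  filter_upwards [hpos, hae] with X h1 h2 h3
  apply h2
  rw [← h3, Real.rpow_rpow_inv h1 (hP i).ne']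

lemma ae_inj (P : Fin N × Fin N → ℝ) (hP : ∀ i, 0 < P i) :
    ∀ᵐ XY ∂(unifBox N), (∀ m, Function.Injective (fM P XY.1 m)) ∧
      (∀ w, Function.Injective (gW P XY.2 w)) := by
  have h : ∀ᵐ X ∂(Measure.pi fun _ : Fin N × Fin N => volume.restrict (Set.Icc (0:ℝ) 1)),
      ∀ i j, i ≠ j → X i ^ P i ≠ X j ^ P j := by
    rw [ae_all_iff]; intro i
    rw [ae_all_iff]; intro j
    by_cases hij : i = j
    · simp [hij]
    · filter_upwards [ae_ne P hP hij] with X hX _ using hX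
  unfold unifBox
  set κ := Measure.pi fun _ : Fin N × Fin N => volume.restrict (Set.Icc (0:ℝ) 1) with hκ
  have h1 := (Measure.quasiMeasurePreserving_fst (μ := κ) (ν := κ)).ae h
  have h2 := (Measure.quasiMeasurePreserving_snd (μ := κ) (ν := κ)).ae h
  filter_upwards [h1, h2] with XY h1 h2
  constructor
  · intro m w w' he
    by_contra hne
    exact h1 (m, w) (m, w') (by simpa using hne) he
  · intro w m m' he
    by_contra hne
    exact h2 (m, w) (m', w) (by simpa using hne) he

lemma meas_M (P : Fin N × Fin N → ℝ) (m w w' : Fin N) :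
    MeasurableSet {XY : (Fin N × Fin N → ℝ) × (Fin N × Fin N → ℝ) | PrefM P XY.1 m w w'} := by
  unfold PrefM
  exact measurableSet_lt (((measurable_pi_apply _).comp measurable_fst).pow_const _)
    (((measurable_pi_apply _).comp measurable_fst).pow_const _)

lemma meas_W (P : Fin N × Fin N → ℝ) (m w w' : Fin N) :
    MeasurableSet {XY : (Fin N × Fin N → ℝ) × (Fin N × Fin N → ℝ) | PrefW P XY.2 m w w'} := by
  unfold PrefW
  exact measurableSet_lt (((measurable_pi_apply _).comp measurable_snd).pow_const _)
    (((measurable_pi_apply _).comp measurable_snd).pow_const _)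

lemma meas_stable (P : Fin N × Fin N → ℝ) (μ : Fin N ≃ Fin N) :
    Measurable fun XY => IsStable P XY μ :=
  .not (.exists fun m => .exists fun w =>
    (measurableSet_setOf.mp (meas_M P _ _ _)).and (measurableSet_setOf.mp (meas_W P _ _ _)))

lemma meas_women (P : Fin N × Fin N → ℝ) (μ : Fin N ≃ Fin N) :
    MeasurableSet {XY | IsWomenOptimal P XY μ} :=
  measurableSet_setOf.mpr <| (meas_stable P μ).and <| .forall fun μ' => (meas_stable P μ').imp <|
    .forall fun _ => measurable_const.or (measurableSet_setOf.mp (meas_W P _ _ _))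

lemma meas_men (P : Fin N × Fin N → ℝ) (μ : Fin N ≃ Fin N) :
    MeasurableSet {XY | IsMenOptimal P XY μ} :=
  measurableSet_setOf.mpr <| (meas_stable P μ).and <| .forall fun μ' => (meas_stable P μ').imp <|
    .forall fun _ => measurable_const.or (measurableSet_setOf.mp (meas_M P _ _ _))

lemma meas_perm (P : Fin N × Fin N → ℝ) (a b : Fin N ≃ Fin N) :
    MeasurableSet {XY | IsStablePerm P XY a b} :=
  measurableSet_setOf.mpr <|
    .and (.forall fun _ => measurable_const.or (measurableSet_setOf.mp (meas_M P _ _ _))) <|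
    .and (.forall fun _ => measurable_const.or (measurableSet_setOf.mp (meas_W P _ _ _))) <|
    .not (.exists fun _ => .exists fun _ => measurable_const.and <| measurable_const.and <|
      (measurableSet_setOf.mp (meas_M P _ _ _)).and (measurableSet_setOf.mp (meas_W P _ _ _)))

open Classical in
/-- An almost sure identity between indicators integrates to one between probabilities. -/
lemma integrate {Ω ι : Type*} [MeasurableSpace Ω] [Fintype ι] (ν : Measure Ω)
    [IsProbabilityMeasure ν]
    (p : Ω → Prop) (q : ι → Ω → Prop) (c : ι → ℝ) (hp : MeasurableSet {x | p x})
    (hq : ∀ i, MeasurableSet {x | q i x})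
    (h : ∀ᵐ x ∂ν, (if p x then (1 : ℝ) else 0) = ∑ i, c i * (if q i x then 1 else 0)) :
    (ν {x | p x}).toReal = ∑ i, c i * (ν {x | q i x}).toReal := by
  have key : ∀ r : Ω → Prop, MeasurableSet {x | r x} →
      ∫ x, (if r x then (1 : ℝ) else 0) ∂ν = (ν {x | r x}).toReal := by
    intro r hr
    have := integral_indicator_one (μ := ν) hr
    rw [← Measure.real, ← this]
    rfl
  have hint : ∀ r : Ω → Prop, MeasurableSet {x | r x} →
      Integrable (fun x => if r x then (1 : ℝ) else 0) ν := by
    intro r hr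
    exact (integrable_const (1 : ℝ)).indicator hr
  rw [← key p hp, integral_congr_ae h, integral_finsetSum _ fun i _ => (hint _ (hq i)).const_mul _]
  refine Finset.sum_congr rfl fun i _ => ?_
  rw [integral_const_mul, key _ (hq i)]

end StableAux

/-- Inclusion–exclusion formulas: the probability that `μ` is stable and women-optimal
(resp. men-optimal) is the signed sum, over permutations `σ` agreeing with `μ` on `M`
(resp. agreeing with `μ⁻¹` on `W`), of the probability that `σ` is stable. -/
theorem prob_optimal_eq_sum (N : ℕ) (hN : 1 ≤ N) (P : Fin N × Fin N → ℝ)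
    (hP : ∀ mw, 0 < P mw) (μ : Fin N ≃ Fin N) :
    ((unifBox N {XY | IsWomenOptimal P XY μ}).toReal =
      ∑ b : Fin N ≃ Fin N, (-1 : ℝ) ^ cyclesGtTwo μ b *
        (unifBox N {XY | IsStablePerm P XY μ b}).toReal) ∧
    ((unifBox N {XY | IsMenOptimal P XY μ}).toReal =
      ∑ a : Fin N ≃ Fin N, (-1 : ℝ) ^ cyclesGtTwo a μ.symm *
        (unifBox N {XY | IsStablePerm P XY a μ.symm}).toReal) := by
  classical
  constructor
  · refine StableAux.integrate (unifBox N) (fun XY => IsWomenOptimal P XY μ)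
      (fun b XY => IsStablePerm P XY μ b) _ (StableAux.meas_women P μ)
      (fun b => StableAux.meas_perm P μ b) ?_
    filter_upwards [StableAux.ae_inj P hP] with XY h
    simp only [StableAux.women_iff, StableAux.perm_iff]
    exact StableAux.pathwise h.1 h.2 μ
  · refine StableAux.integrate (unifBox N) (fun XY => IsMenOptimal P XY μ)
      (fun a XY => IsStablePerm P XY a μ.symm) _ (StableAux.meas_men P μ)
      (fun a => StableAux.meas_perm P a μ.symm) ?_
    filter_upwards [StableAux.ae_inj P hP] with XY h
    simp only [StableAux.men_iff, StableAux.perm_iff]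
    rw [StableAux.pathwise h.2 h.1 μ.symm]
    refine Finset.sum_congr rfl fun a _ => ?_
    rw [StableAux.cycles_swap, StableAux.SP_swap]
end

section
/- Restriction to acceptable pairs: fix a complete preference profile and a set E ⊆ M × W such that every man ranks all of his E-partners above all of his non-E-partners, and every woman ranks all of her E-partners above all of her non-E-partners. Consider the incomplete market on E whose incomplete preference profile is the restriction of the complete orders to neighborhoods. Then: (1) for every stable matching μ of the complete market, the partial matching μ ∩ E = {(m, μ m) : (m, μ m) ∈ E} is stable in the incomplete market; (2) the set {μ ∩ E : μ stable in the complete market} equals the set of stable partial matchings of the incomplete market; and (3) if μ is stable and women-optimal (resp. men-optimal) in the complete market, then μ ∩ E is stable and women-optimal (resp. men-optimal) in the incomplete market. -/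
section

variable {N : ℕ}

/-- The matching `μ` of the complete market is stable. -/
def MatchStable (prefM prefW : Fin N → Fin N → Fin N → Prop) (μ : Fin N ≃ Fin N) : Prop :=
  ¬ ∃ m w, prefM m w (μ m) ∧ prefW w m (μ.symm w)

/-- `μ` is women-optimal among stable matchings of the complete market. -/
def MatchWomenOptimal (prefM prefW : Fin N → Fin N → Fin N → Prop)
    (μ : Fin N ≃ Fin N) : Prop :=
  ∀ μ' : Fin N ≃ Fin N, MatchStable prefM prefW μ' →
    ∀ w, μ.symm w = μ'.symm w ∨ prefW w (μ.symm w) (μ'.symm w)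

/-- `μ` is men-optimal among stable matchings of the complete market. -/
def MatchMenOptimal (prefM prefW : Fin N → Fin N → Fin N → Prop)
    (μ : Fin N ≃ Fin N) : Prop :=
  ∀ μ' : Fin N ≃ Fin N, MatchStable prefM prefW μ' →
    ∀ m, μ m = μ' m ∨ prefM m (μ m) (μ' m)

/-- `ν` is a partial matching of the incomplete market on `E`. -/
def IsPartialMatching (E ν : Set (Fin N × Fin N)) : Prop :=
  ν ⊆ E ∧ ∀ e₁ ∈ ν, ∀ e₂ ∈ ν, (e₁.1 = e₂.1 ∨ e₁.2 = e₂.2) → e₁ = e₂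

/-- `(m, w) ∈ E` blocks the partial matching `ν`: `m` is unmatched in `ν` or prefers `w` to
his partner, and `w` is unmatched in `ν` or prefers `m` to her partner. -/
def PBlocks (prefM prefW : Fin N → Fin N → Fin N → Prop) (E ν : Set (Fin N × Fin N))
    (m w : Fin N) : Prop :=
  (m, w) ∈ E ∧ (∀ w', (m, w') ∈ ν → prefM m w w') ∧ (∀ m', (m', w) ∈ ν → prefW w m m')

/-- `ν` is a stable partial matching of the incomplete market on `E` (preferences being the
restrictions of the complete orders to neighborhoods). -/
def PStable (prefM prefW : Fin N → Fin N → Fin N → Prop) (E ν : Set (Fin N × Fin N)) : Prop :=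
  IsPartialMatching E ν ∧ ¬ ∃ m w, PBlocks prefM prefW E ν m w

/-- `ν` is a women-optimal stable partial matching of the incomplete market on `E`. -/
def PWomenOptimal (prefM prefW : Fin N → Fin N → Fin N → Prop)
    (E ν : Set (Fin N × Fin N)) : Prop :=
  ∀ ν', PStable prefM prefW E ν' →
    ∀ m' w, (m', w) ∈ ν' → ∃ m, (m, w) ∈ ν ∧ (m = m' ∨ prefW w m m')

/-- `ν` is a men-optimal stable partial matching of the incomplete market on `E`. -/
def PMenOptimal (prefM prefW : Fin N → Fin N → Fin N → Prop)
    (E ν : Set (Fin N × Fin N)) : Prop :=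
  ∀ ν', PStable prefM prefW E ν' →
    ∀ m w', (m, w') ∈ ν' → ∃ w, (m, w) ∈ ν ∧ (w = w' ∨ prefM m w w')

/-- The restriction `μ ∩ E` of a complete matching `μ` to the acceptable pairs. -/
def restrictE (E : Set (Fin N × Fin N)) (μ : Fin N ≃ Fin N) : Set (Fin N × Fin N) :=
  {p | p ∈ E ∧ μ p.1 = p.2}

/-- Existence of a stable matching between finite sets of equal size. -/
theorem exists_stable_aux {A B : Type*} [Fintype A] [Fintype B]
    (hc : Fintype.card A = Fintype.card B)
    (P : A → B → B → Prop) (Q : B → A → A → Prop)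
    (Pi : ∀ a b, ¬ P a b b) (Pt : ∀ a x y z, P a x y → P a y z → P a x z)
    (Pc : ∀ a x y, x ≠ y → P a x y ∨ P a y x)
    (Qt : ∀ a x y z, Q a x y → Q a y z → Q a x z)
    (Qi : ∀ a b, ¬ Q a b b)
    (Qc : ∀ a x y, x ≠ y → Q a x y ∨ Q a y x) :
    ∃ σ : A ≃ B, ¬ ∃ a b, P a b (σ a) ∧ Q b a (σ.symm b) := by
  classical
  have wf : ∀ a, WellFounded (P a) := by
    intro a
    haveI : IsTrans B (P a) := ⟨Pt a⟩
    haveI : Std.Irrefl (P a) := ⟨Pi a⟩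
    exact Finite.wellFounded_of_trans_of_irrefl (P a)
  let Inv : (A → B) → Prop := fun f => ∀ a b, P a b (f a) → ∃ a', f a' = b ∧ Q b a' a
  let S : Finset (A → B) := Finset.univ.filter Inv
  let rk : A → B → ℕ := fun a b => (Finset.univ.filter (fun b' => P a b' b)).card
  have hrk : ∀ a x y, P a x y → rk a x < rk a y := by
    intro a x y h
    apply Finset.card_lt_card
    rw [Finset.ssubset_iff_of_subset]
    · exact ⟨x, by simpa using h, by simpa using Pi a x⟩
    · intro b hb
      simp only [Finset.mem_filter, Finset.mem_univ, true_and] at hb ⊢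
      exact Pt a _ _ _ hb h
  have hS : S.Nonempty := by
    have hB : ∀ a : A, Nonempty B := by
      intro a
      rw [← Fintype.card_pos_iff, ← hc]
      exact Fintype.card_pos_iff.mpr ⟨a⟩
    have hm : ∀ a : A, ∃ b, ∀ b', ¬ P a b' b := by
      intro a
      obtain ⟨b0⟩ := hB a
      obtain ⟨b, -, hb⟩ := (wf a).has_min Set.univ ⟨b0, trivial⟩
      exact ⟨b, fun b' => hb b' trivial⟩
    choose f hf using hm
    exact ⟨f, by
      simp only [S, Finset.mem_filter, Finset.mem_univ, true_and]
      intro a b h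
      exact absurd h (hf a b)⟩
  obtain ⟨f, hfS, hmax⟩ := S.exists_max_image (fun f => ∑ a, rk a (f a)) hS
  have hf : Inv f := by simpa [S] using hfS
  have hinj : Function.Injective f := by
    by_contra hni
    have hns : ¬ Function.Surjective f := fun hs =>
      hni ((Fintype.bijective_iff_surjective_and_card f).mpr ⟨hs, hc⟩).1
    have : ∃ a1 a2, f a1 = f a2 ∧ Q (f a2) a1 a2 := by
      simp only [Function.Injective, not_forall] at hni
      obtain ⟨x, y, hxy, hne⟩ := hni
      rcases Qc (f y) x y hne with h | h
      · exact ⟨x, y, hxy, h⟩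
      · exact ⟨y, x, hxy.symm, hxy ▸ h⟩
    obtain ⟨a1, a2, h12, hQ⟩ := this
    have hnext : ∃ b, P a2 (f a2) b := by
      by_contra hno
      push Not at hno
      apply hns
      intro b
      by_cases hb : b = f a2
      · exact ⟨a2, hb.symm⟩
      · rcases Pc a2 b (f a2) hb with h | h
        · obtain ⟨a', h', -⟩ := hf a2 b h
          exact ⟨a', h'⟩
        · exact absurd h (hno b)
    obtain ⟨b, hb, hbmin⟩ := (wf a2).has_min {b | P a2 (f a2) b} hnext
    have hb : P a2 (f a2) b := hb
    have hbmin : ∀ x, P a2 (f a2) x → ¬ P a2 x b := fun x hx => hbmin x hx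
    have h1ne : a1 ≠ a2 := by
      rintro rfl
      exact Qi _ _ hQ
    have hg : Inv (Function.update f a2 b) := by
      -- transfer of holders
      have key : ∀ a v, (∃ a', f a' = v ∧ Q v a' a) →
          ∃ a', Function.update f a2 b a' = v ∧ Q v a' a := by
        rintro a v ⟨a', rfl, hq⟩
        by_cases h : a' = a2
        · subst h
          exact ⟨a1, by rw [Function.update_of_ne h1ne, h12], Qt _ _ _ _ hQ hq⟩
        · exact ⟨a', by rw [Function.update_of_ne h], hq⟩
      intro a v hv
      by_cases ha : a = a2
      · subst ha
        rw [Function.update_self] at hv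
        by_cases hvf : v = f a
        · subst hvf
          exact ⟨a1, by rw [Function.update_of_ne h1ne, h12], hQ⟩
        · rcases Pc a v (f a) hvf with h | h
          · exact key a v (hf a v h)
          · exact absurd hv (hbmin v h)
      · rw [Function.update_of_ne ha] at hv
        exact key a v (hf a v hv)
    have hle := hmax (Function.update f a2 b) (by simpa [S] using hg)
    have hlt : ∑ a, rk a (f a) < ∑ a, rk a (Function.update f a2 b a) := by
      apply Finset.sum_lt_sum
      · intro a _
        by_cases ha : a = a2
        · subst ha
          rw [Function.update_self]
          exact (hrk _ _ _ hb).le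
        · rw [Function.update_of_ne ha]
      · refine ⟨a2, Finset.mem_univ _, ?_⟩
        rw [Function.update_self]
        exact hrk _ _ _ hb
    exact absurd hle (not_le.mpr hlt)
  have hbij := (Fintype.bijective_iff_injective_and_card f).mpr ⟨hinj, hc⟩
  refine ⟨Equiv.ofBijective f hbij, ?_⟩
  rintro ⟨a, b, hP, hQ⟩
  obtain ⟨a', rfl, hq⟩ := hf a b hP
  have : (Equiv.ofBijective f hbij).symm (f a') = a' :=
    (Equiv.ofBijective f hbij).symm_apply_apply a'
  rw [this] at hQ
  exact Qi _ _ (Qt _ _ _ _ hQ hq)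

/-- A stable partial matching extends to a stable matching of the complete market. -/
theorem exists_extension_aux
    (prefM prefW : Fin N → Fin N → Fin N → Prop)
    (hM : ∀ m, IsStrictTotalOrder (Fin N) (prefM m))
    (hW : ∀ w, IsStrictTotalOrder (Fin N) (prefW w))
    (E : Set (Fin N × Fin N))
    (hEM : ∀ m w w', (m, w) ∈ E → (m, w') ∉ E → prefM m w w')
    (hEW : ∀ w m m', (m, w) ∈ E → (m', w) ∉ E → prefW w m m')
    (ν : Set (Fin N × Fin N)) (hν : PStable prefM prefW E ν) :
    ∃ μ : Fin N ≃ Fin N, MatchStable prefM prefW μ ∧ ν = restrictE E μ := by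
  classical
  obtain ⟨⟨hsub, hpm⟩, hnb⟩ := hν
  have Mi : ∀ m w, ¬ prefM m w w := fun m w => (hM m).irrefl w
  have Wi : ∀ m w, ¬ prefW m w w := fun m w => (hW m).irrefl w
  have Mt : ∀ m x y z, prefM m x y → prefM m y z → prefM m x z := fun m => (hM m).trans
  have Wt : ∀ m x y z, prefW m x y → prefW m y z → prefW m x z := fun m => (hW m).trans
  have Mc : ∀ m x y, x ≠ y → prefM m x y ∨ prefM m y x := by
    intro m x y h
    haveI := hM m
    rcases trichotomous_of (prefM m) x y with h' | h' | h'
    exacts [Or.inl h', absurd h' h, Or.inr h']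
  have Wc : ∀ m x y, x ≠ y → prefW m x y ∨ prefW m y x := by
    intro m x y h
    haveI := hW m
    rcases trichotomous_of (prefW m) x y with h' | h' | h'
    exacts [Or.inl h', absurd h' h, Or.inr h']
  have uM : ∀ m w w', (m, w) ∈ ν → (m, w') ∈ ν → w = w' := fun m w w' h h' =>
    congrArg Prod.snd (hpm _ h _ h' (Or.inl rfl))
  have uW : ∀ m m' w, (m, w) ∈ ν → (m', w) ∈ ν → m = m' := fun m m' w h h' =>
    congrArg Prod.fst (hpm _ h _ h' (Or.inr rfl))
  let p : Fin N → Prop := fun m => ∃ w, (m, w) ∈ ν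
  let q : Fin N → Prop := fun w => ∃ m, (m, w) ∈ ν
  let e : {m // p m} ≃ {w // q w} :=
    { toFun := fun m => ⟨m.2.choose, m.1, m.2.choose_spec⟩
      invFun := fun w => ⟨w.2.choose, w.1, w.2.choose_spec⟩
      left_inv := by
        rintro ⟨m, hm⟩
        apply Subtype.ext
        have h : q hm.choose := ⟨m, hm.choose_spec⟩
        exact uW _ _ _ h.choose_spec hm.choose_spec
      right_inv := by
        rintro ⟨w, hw⟩
        apply Subtype.ext
        have h : p hw.choose := ⟨w, hw.choose_spec⟩
        exact uM _ _ _ h.choose_spec hw.choose_spec }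
  have he : ∀ m : {m // p m}, (m.1, (e m).1) ∈ ν := fun m => m.2.choose_spec
  have hcard : Fintype.card {m // ¬ p m} = Fintype.card {w // ¬ q w} := by
    rw [Fintype.card_subtype_compl, Fintype.card_subtype_compl, Fintype.card_congr e]
  obtain ⟨σ, hσ⟩ := exists_stable_aux hcard
    (fun m x y => prefM m.1 x.1 y.1) (fun w x y => prefW w.1 x.1 y.1)
    (fun m w => Mi _ _) (fun m x y z => Mt _ _ _ _)
    (fun m x y h => Mc _ _ _ (fun h' => h (Subtype.ext h')))
    (fun m x y z => Wt _ _ _ _) (fun m w => Wi _ _)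
    (fun m x y h => Wc _ _ _ (fun h' => h (Subtype.ext h')))
  let μ : Fin N ≃ Fin N := Equiv.subtypeCongr e σ
  have hμp : ∀ m, p m → (m, μ m) ∈ ν := by
    intro m hm
    have : μ m = (e ⟨m, hm⟩).1 := by
      simp [μ, Equiv.subtypeCongr, Equiv.sumCompl_symm_apply_of_pos hm]
    rw [this]
    exact he ⟨m, hm⟩
  have hμn : ∀ m (hm : ¬ p m), μ m = (σ ⟨m, hm⟩).1 := by
    intro m hm
    simp [μ, Equiv.subtypeCongr, Equiv.sumCompl_symm_apply_of_neg hm]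
  have hμν : ∀ m w, (m, w) ∈ ν → μ m = w := fun m w h =>
    uM _ _ _ (hμp m ⟨w, h⟩) h
  have hout : ∀ m w, ¬ p m → ¬ q w → (m, w) ∉ E := by
    intro m w hm hw hE
    exact hnb ⟨m, w, hE, fun w' h => absurd ⟨w', h⟩ hm, fun m' h => absurd ⟨m', h⟩ hw⟩
  have hres : ∀ m, (m, μ m) ∈ E → (m, μ m) ∈ ν := by
    intro m h
    by_cases hm : p m
    · exact hμp m hm
    · exfalso
      refine hout m (μ m) hm ?_ h
      rw [hμn m hm]
      exact (σ ⟨m, hm⟩).2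
  refine ⟨μ, ?_, ?_⟩
  · rintro ⟨m, w, h1, h2⟩
    by_cases hE : (m, w) ∈ E
    · refine hnb ⟨m, w, hE, ?_, ?_⟩
      · intro w' h
        rwa [hμν _ _ h] at h1
      · intro m' h
        have := hμν _ _ h
        rw [← this, Equiv.symm_apply_apply, this] at h2
        exact h2
    · have hm : ¬ p m := by
        intro hm
        exact Mi _ _ (Mt _ _ _ _ h1 (hEM _ _ _ (hsub (hμp m hm)) hE))
      have hw : ¬ q w := by
        rintro ⟨m', h⟩
        have := hμν _ _ h
        rw [← this, Equiv.symm_apply_apply, this] at h2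
        exact Wi _ _ (Wt _ _ _ _ h2 (hEW _ _ _ (hsub h) hE))
      refine hσ ⟨⟨m, hm⟩, ⟨w, hw⟩, ?_, ?_⟩
      · rwa [hμn m hm] at h1
      · have : μ.symm w = (σ.symm ⟨w, hw⟩).1 := by
          rw [Equiv.symm_apply_eq, hμn _ (σ.symm ⟨w, hw⟩).2]
          simp
        rwa [this] at h2
  · ext ⟨m, w⟩
    constructor
    · intro h
      exact ⟨hsub h, hμν _ _ h⟩
    · rintro ⟨hE, h⟩
      have h : μ m = w := h
      subst h
      exact hres m hE

/-- Restriction to acceptable pairs.  Suppose every man ranks all his `E`-partners above all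
his non-`E`-partners, and symmetrically for women.  Then (1) the restriction `μ ∩ E` of any
stable matching `μ` of the complete market is stable in the incomplete market on `E`;
(2) the stable partial matchings of the incomplete market are exactly the restrictions of
the stable matchings of the complete market; and (3) if `μ` is stable and women-optimal
(resp. men-optimal) in the complete market, then `μ ∩ E` is stable and women-optimal
(resp. men-optimal) in the incomplete market. -/
theorem restriction_to_acceptable (hN : 1 ≤ N)
    (prefM prefW : Fin N → Fin N → Fin N → Prop)
    (hM : ∀ m, IsStrictTotalOrder (Fin N) (prefM m))
    (hW : ∀ w, IsStrictTotalOrder (Fin N) (prefW w))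
    (E : Set (Fin N × Fin N))
    (hEM : ∀ m w w', (m, w) ∈ E → (m, w') ∉ E → prefM m w w')
    (hEW : ∀ w m m', (m, w) ∈ E → (m', w) ∉ E → prefW w m m') :
    (∀ μ : Fin N ≃ Fin N, MatchStable prefM prefW μ →
        PStable prefM prefW E (restrictE E μ)) ∧
    ({ν | ∃ μ : Fin N ≃ Fin N, MatchStable prefM prefW μ ∧ ν = restrictE E μ} =
        {ν | PStable prefM prefW E ν}) ∧
    (∀ μ : Fin N ≃ Fin N, MatchStable prefM prefW μ → MatchWomenOptimal prefM prefW μ →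
        PWomenOptimal prefM prefW E (restrictE E μ)) ∧
    (∀ μ : Fin N ≃ Fin N, MatchStable prefM prefW μ → MatchMenOptimal prefM prefW μ →
        PMenOptimal prefM prefW E (restrictE E μ)) := by
  have h1 : ∀ μ : Fin N ≃ Fin N, MatchStable prefM prefW μ →
      PStable prefM prefW E (restrictE E μ) := by
    intro μ hμ
    refine ⟨⟨fun x hx => hx.1, ?_⟩, ?_⟩
    · rintro ⟨a, b⟩ ⟨-, h⟩ ⟨c, d⟩ ⟨-, h'⟩ hor
      simp only at h h' hor
      subst h h'
      rcases hor with h | h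
      · rw [h]
      · rw [μ.injective h]
    · rintro ⟨m, w, hE, hm, hw⟩
      refine hμ ⟨m, w, ?_, ?_⟩
      · by_cases h : (m, μ m) ∈ E
        · exact hm _ ⟨h, rfl⟩
        · exact hEM _ _ _ hE h
      · by_cases h : (μ.symm w, w) ∈ E
        · exact hw _ ⟨h, μ.apply_symm_apply w⟩
        · exact hEW _ _ _ hE h
  have h2 := exists_extension_aux prefM prefW hM hW E hEM hEW
  refine ⟨h1, ?_, ?_, ?_⟩
  · ext ν
    constructor
    · rintro ⟨μ, hμ, rfl⟩
      exact h1 μ hμ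
    · exact h2 ν
  · intro μ hμ hopt ν' hν' m' w hmem
    obtain ⟨μ', hμ', rfl⟩ := h2 ν' hν'
    obtain ⟨hE, hw⟩ := hmem
    have hw : μ' m' = w := hw
    have hs : μ'.symm w = m' := by rw [← hw, Equiv.symm_apply_apply]
    have ho := hopt μ' hμ' w
    rw [hs] at ho
    refine ⟨μ.symm w, ⟨?_, μ.apply_symm_apply w⟩, ho⟩
    by_contra hn
    rcases ho with h | h
    · exact hn (h ▸ hE)
    · exact (hW w).irrefl _ ((hW w).trans _ _ _ h (hEW _ _ _ hE hn))
  · intro μ hμ hopt ν' hν' m w' hmem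
    obtain ⟨μ', hμ', rfl⟩ := h2 ν' hν'
    obtain ⟨hE, hw⟩ := hmem
    have hw : μ' m = w' := hw
    have ho := hopt μ' hμ' m
    rw [hw] at ho
    refine ⟨μ m, ⟨?_, rfl⟩, ho⟩
    by_contra hn
    rcases ho with h | h
    · exact hn (h ▸ hE)
    · exact (hM m).irrefl _ ((hM m).trans _ _ _ h (hEM _ _ _ hE hn))

end
end

section
/- Rotation elimination: fix a complete preference profile, a stable matching μ₁, and a rotation r that is exposed and women-improving in μ₁. Let μ₂ be the matching obtained by eliminating r: μ₂(m) = r⁻¹(m) for men m in r and μ₂(m) = μ₁(m) otherwise. Then μ₂ is a stable matching, every woman weakly prefers μ₂ to μ₁ and every man weakly prefers μ₁ to μ₂ (with strict preference exactly for the agents in r). Moreover, if two distinct rotations r₁ ≠ r₂ are both exposed and women-improving in the same stable matching μ₁, then r₁ and r₂ involve disjoint sets of people. -/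
section

variable {N : ℕ}

/-- `w` belongs to the set of women `m` could improve with: `μ m ≻ₘ w` and `m ≻_w μ⁻¹ w`. -/
def InS (prefM prefW : Fin N → Fin N → Fin N → Prop) (μ : Fin N ≃ Fin N)
    (m w : Fin N) : Prop :=
  prefM m (μ m) w ∧ prefW w m (μ.symm w)

/-- A rotation, encoded as a simple directed cycle
`m₀ → w₀ → m₁ → w₁ → ⋯ → m_{k+1} → w_{k+1} → m₀` alternating men and women, of length
`2(k+2) ≥ 4`: the men `mi` and women `wi` are pairwise distinct, the successor of the man
`mi i` is the woman `wi i` and the successor of the woman `wi i` is the man `mi (i+1)`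
(indices mod `k+2`), so the predecessor of `mi i` is `wi (i-1)`.
It is exposed and women-improving in the stable matching `μ` if for every man `mi i` of the
cycle his successor `wi i` is `μ (mi i)` and his predecessor `wi (i-1)` is his most
preferred woman among the women `w` with `μ (mi i) ≻_{mi i} w` and `mi i ≻_w μ⁻¹ w`. -/
def ExposedWomenImproving (prefM prefW : Fin N → Fin N → Fin N → Prop)
    (μ : Fin N ≃ Fin N) {k : ℕ} (mi wi : Fin (k + 2) → Fin N) : Prop :=
  Function.Injective mi ∧ Function.Injective wi ∧
    ∀ i, wi i = μ (mi i) ∧ InS prefM prefW μ (mi i) (wi (i - 1)) ∧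
      ∀ w', InS prefM prefW μ (mi i) w' →
        wi (i - 1) = w' ∨ prefM (mi i) (wi (i - 1)) w'

open scoped Fin.CommRing in
theorem fin_val_nsmul_one {n : ℕ} (a : Fin (n + 2)) : a.val • (1 : Fin (n + 2)) = a := by
  have h : a.val • (1 : Fin (n + 2)) = ((a.val : ℕ) : Fin (n + 2)) := nsmul_one _
  rw [h, Fin.cast_val_eq_self]

open scoped Fin.CommRing in
theorem fin_card_nsmul_one {n : ℕ} : (n + 2) • (1 : Fin (n + 2)) = 0 := by
  have h : (n + 2) • (1 : Fin (n + 2)) = ((n + 2 : ℕ) : Fin (n + 2)) := nsmul_one _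
  rw [h, Fin.natCast_self]

/-- Rotation elimination: eliminating a rotation `r` (given by `mi`, `wi`) that is exposed
and women-improving in a stable matching `μ₁` — i.e. replacing `μ₁ (mi i) = wi i` by
`wi (i-1)` and keeping all other couples — yields a well-defined matching `e` (a bijection),
which is stable; every woman weakly prefers `e` to `μ₁` and every man weakly prefers `μ₁`
to `e`, strictly exactly for the agents of `r`.  Moreover two rotations exposed and
women-improving in the same stable matching `μ₁` that share a person coincide (distinct
such rotations involve disjoint sets of people). -/
theorem rotation_elimination (hN : 1 ≤ N)
    (prefM prefW : Fin N → Fin N → Fin N → Prop)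
    (hM : ∀ m, IsStrictTotalOrder (Fin N) (prefM m))
    (hW : ∀ w, IsStrictTotalOrder (Fin N) (prefW w))
    (μ₁ : Fin N ≃ Fin N) (hμ₁ : MatchStable prefM prefW μ₁)
    (k : ℕ) (mi wi : Fin (k + 2) → Fin N)
    (hr : ExposedWomenImproving prefM prefW μ₁ mi wi) :
    (∃ e : Fin N ≃ Fin N,
      (∀ i, e (mi i) = wi (i - 1)) ∧ ∀ m, (∀ i, mi i ≠ m) → e m = μ₁ m) ∧
    (∀ e : Fin N ≃ Fin N,
      (∀ i, e (mi i) = wi (i - 1)) → (∀ m, (∀ i, mi i ≠ m) → e m = μ₁ m) →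
        MatchStable prefM prefW e ∧
        (∀ w, (∃ i, wi i = w) → prefW w (e.symm w) (μ₁.symm w)) ∧
        (∀ w, (∀ i, wi i ≠ w) → e.symm w = μ₁.symm w) ∧
        (∀ m, (∃ i, mi i = m) → prefM m (μ₁ m) (e m))) ∧
    (∀ (k' : ℕ) (mi' wi' : Fin (k' + 2) → Fin N),
      ExposedWomenImproving prefM prefW μ₁ mi' wi' →
        ((∃ i j, mi i = mi' j) ∨ (∃ i j, wi i = wi' j)) →
          (Set.range mi = Set.range mi' ∧ Set.range wi = Set.range wi' ∧
            (∀ i j, mi i = mi' j → wi i = wi' j) ∧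
            (∀ i j, wi i = wi' j → mi (i + 1) = mi' (j + 1)))) := by
  obtain ⟨hmi, hwi, hr⟩ := hr
  have hback : ∀ (k' : ℕ) (mi' wi' : Fin (k' + 2) → Fin N),
      ExposedWomenImproving prefM prefW μ₁ mi' wi' → ∀ i j, mi i = mi' j →
        mi (i - 1) = mi' (j - 1) := by
    intro k' mi' wi' hr' i j hij
    obtain ⟨-, -, hr'⟩ := hr'
    have h1 := (hr i).2
    have h2 := (hr' j).2
    rw [← hij] at h2
    have h : wi (i - 1) = wi' (j - 1) := by
      rcases h1.2 _ h2.1 with h | h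
      · exact h
      · rcases h2.2 _ h1.1 with h' | h'
        · exact h'.symm
        · have := hM (mi i)
          exact absurd (_root_.trans h h') (irrefl _)
    rw [(hr _).1, (hr' _).1] at h
    exact μ₁.injective h
  refine ⟨?_, ?_, ?_⟩
  · classical
    let f : Fin N → Fin N := fun m =>
      if h : ∃ i, mi i = m then wi (h.choose - 1) else μ₁ m
    have f1 : ∀ i, f (mi i) = wi (i - 1) := by
      intro i
      have h : ∃ j, mi j = mi i := ⟨i, rfl⟩
      have := hmi h.choose_spec
      simp only [f, dif_pos h, this]
    have f2 : ∀ m, (∀ i, mi i ≠ m) → f m = μ₁ m := by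
      intro m hm
      have h : ¬ ∃ i, mi i = m := by simpa using hm
      simp only [f, dif_neg h]
    have hf : Function.Injective f := by
      intro a b hab
      by_cases ha : ∃ i, mi i = a
      · obtain ⟨i, rfl⟩ := ha
        by_cases hb : ∃ i, mi i = b
        · obtain ⟨j, rfl⟩ := hb
          rw [f1, f1] at hab
          rw [sub_left_injective (hwi hab)]
        · push Not at hb
          rw [f1, f2 b hb, (hr _).1] at hab
          exact absurd (μ₁.injective hab) (hb _)
      · push Not at ha
        by_cases hb : ∃ i, mi i = b
        · obtain ⟨j, rfl⟩ := hb
          rw [f1, f2 a ha, (hr _).1] at hab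
          exact absurd (μ₁.injective hab).symm (ha _)
        · push Not at hb
          rw [f2 a ha, f2 b hb] at hab
          exact μ₁.injective hab
    exact ⟨Equiv.ofBijective f (Finite.injective_iff_bijective.mp hf), f1, f2⟩
  · intro e e1 e2
    have hw1 : ∀ w, (∃ i, wi i = w) → prefW w (e.symm w) (μ₁.symm w) := by
      rintro _ ⟨i, rfl⟩
      have h := e1 (i + 1)
      have h2 := (hr (i + 1)).2.1.2
      rw [add_sub_cancel_right] at h h2
      rwa [← h, e.symm_apply_apply, h]
    have hw2 : ∀ w, (∀ i, wi i ≠ w) → e.symm w = μ₁.symm w := by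
      intro w hw
      rw [Equiv.symm_apply_eq, e2, Equiv.apply_symm_apply]
      intro i hi
      apply hw i
      rw [(hr i).1, hi, Equiv.apply_symm_apply]
    refine ⟨?_, hw1, hw2, ?_⟩
    · rintro ⟨m, w, h1, h2⟩
      have := hM m
      have := hW w
      have h3 : prefW w m (μ₁.symm w) := by
        by_cases hw : ∃ i, wi i = w
        · exact _root_.trans h2 (hw1 w hw)
        · push Not at hw
          rwa [← hw2 w hw]
      by_cases hm : ∃ i, mi i = m
      · obtain ⟨i, rfl⟩ := hm
        rw [e1] at h1
        rcases trichotomous_of (prefM (mi i)) w (μ₁ (mi i)) with h | h | h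
        · exact hμ₁ ⟨_, _, h, h3⟩
        · rw [h, Equiv.symm_apply_apply, ← h] at h3
          exact irrefl _ h3
        · rcases (hr i).2.2 w ⟨h, h3⟩ with h' | h'
          · rw [h'] at h1
            exact irrefl _ h1
          · exact irrefl _ (_root_.trans h1 h')
      · push Not at hm
        rw [e2 m hm] at h1
        exact hμ₁ ⟨_, _, h1, h3⟩
    · rintro _ ⟨i, rfl⟩
      rw [e1]
      exact (hr i).2.1.1
  · intro k' mi' wi' hr' hshare
    have hb := hback k' mi' wi' hr'
    have hmw : ∀ i j, wi i = wi' j ↔ mi i = mi' j := by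
      intro i j
      rw [(hr i).1, (hr'.2.2 j).1, μ₁.injective.eq_iff]
    have hn : ∀ n : ℕ, ∀ i j, mi i = mi' j → mi (i - n • 1) = mi' (j - n • 1) := by
      intro n
      induction n with
      | zero => intro i j h; simpa using h
      | succ n ih =>
        intro i j h
        have := hb _ _ (ih i j h)
        rw [succ_nsmul, succ_nsmul, ← sub_sub, ← sub_sub]
        exact this
    obtain ⟨i, j, hij⟩ : ∃ i j, mi i = mi' j := by
      rcases hshare with h | ⟨i, j, h⟩
      · exact h
      · exact ⟨i, j, (hmw i j).1 h⟩
    have hA : ∀ a, ∃ b, mi a = mi' b := by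
      intro a
      refine ⟨j - (i - a).val • 1, ?_⟩
      have := hn (i - a).val i j hij
      rwa [fin_val_nsmul_one, sub_sub_cancel] at this
    have hB : ∀ b, ∃ a, mi a = mi' b := by
      intro b
      refine ⟨i - (j - b).val • 1, ?_⟩
      have := hn (j - b).val i j hij
      rwa [fin_val_nsmul_one, sub_sub_cancel] at this
    refine ⟨?_, ?_, fun i j => (hmw i j).2, ?_⟩
    · ext x
      constructor
      · rintro ⟨a, rfl⟩
        obtain ⟨b, h⟩ := hA a
        exact ⟨b, h.symm⟩
      · rintro ⟨b, rfl⟩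
        exact hB b
    · ext x
      constructor
      · rintro ⟨a, rfl⟩
        obtain ⟨b, h⟩ := hA a
        exact ⟨b, ((hmw _ _).2 h).symm⟩
      · rintro ⟨b, rfl⟩
        obtain ⟨a, h⟩ := hB b
        exact ⟨a, (hmw _ _).2 h⟩
    · intro a b hab
      have h := hn ((k + 2) * (k' + 2) - 1) a b ((hmw _ _).1 hab)
      have hpos : 1 ≤ (k + 2) * (k' + 2) := Nat.mul_pos (by omega) (by omega)
      have c1 : ((k + 2) * (k' + 2) - 1) • (1 : Fin (k + 2)) = -1 := by
        rw [eq_neg_iff_add_eq_zero, ← succ_nsmul, Nat.sub_add_cancel hpos, mul_comm, mul_nsmul', fin_card_nsmul_one, nsmul_zero]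
      have c2 : ((k + 2) * (k' + 2) - 1) • (1 : Fin (k' + 2)) = -1 := by
        rw [eq_neg_iff_add_eq_zero, ← succ_nsmul, Nat.sub_add_cancel hpos, mul_nsmul', fin_card_nsmul_one, nsmul_zero]
      rwa [c1, c2, sub_neg_eq_add, sub_neg_eq_add] at h

end
end
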